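/- arXiv:1107.5552 — 2 statements merged into one kernel-verified Lean document; each statement's English description precedes it below -/
import Mathlib

section
/- Let G=(V,D,B) be a mixed graph and (Y_v : v∈V) a family of subsets of V. If, for each node v, the set Y_v satisfies the half-trek criterion with respect to v, and there is a total ordering ≺ on V such that w≺v whenever w∈Y_v∩htr(v), then G is rationally identifiable. -/
open scoped Classical Matrix

/-- A mixed graph `G = (V, D, B)`: a finite vertex set `V`, a set `D` of directed
edges, and a symmetric set `B` of bidirected edges; no self-loops. -/
structure MixedGraph (V : Type*) [Fintype V] [DecidableEq V] where
  D : Finset (V × V)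
  B : Finset (V × V)
  B_symm : ∀ v w : V, (v, w) ∈ B → (w, v) ∈ B
  D_irrefl : ∀ v : V, (v, v) ∉ D
  B_irrefl : ∀ v : V, (v, v) ∉ B

namespace MixedGraph

variable {V : Type*} [Fintype V] [DecidableEq V]

/-- The parents of `v`: nodes `w` with `w → v ∈ D`. -/
def pa (G : MixedGraph V) (v : V) : Finset V :=
  Finset.univ.filter fun w => (w, v) ∈ G.D

/-- The siblings of `v`: nodes `w` with `w ↔ v ∈ B`. -/
def sib (G : MixedGraph V) (v : V) : Finset V :=
  Finset.univ.filter fun w => (w, v) ∈ G.B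

/-- A trek: a walk with no colliding arrowheads.  The field `left` lists the nodes of the
left-hand side from top (head) to source (last); `right` lists the nodes of the right-hand
side from top (head) to target (last); consecutive nodes in each list are joined by directed
edges pointing away from the head.  If `hasBidir` then the two heads are joined by a
bidirected edge, otherwise they coincide (the top node). -/
structure Trek (G : MixedGraph V) where
  left : List V
  right : List V
  left_ne : left ≠ []
  right_ne : right ≠ []
  hasBidir : Bool
  left_chain : left.Chain' fun a b => (a, b) ∈ G.D
  right_chain : right.Chain' fun a b => (a, b) ∈ G.D
  head_cond : if hasBidir then (left.head left_ne, right.head right_ne) ∈ G.B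
              else left.head left_ne = right.head right_ne

namespace Trek

variable {G : MixedGraph V}

/-- The source of a trek. -/
def source (π : G.Trek) : V := π.left.getLast π.left_ne

/-- The target of a trek. -/
def target (π : G.Trek) : V := π.right.getLast π.right_ne

/-- The left-hand side `Left(π)` of a trek, as a set of nodes. -/
def leftSet (π : G.Trek) : Finset V := π.left.toFinset

/-- The right-hand side `Right(π)` of a trek, as a set of nodes. -/
def rightSet (π : G.Trek) : Finset V := π.right.toFinset

/-- A half-trek is a trek whose left-hand side consists of exactly one node. -/
def IsHalfTrek (π : G.Trek) : Prop := π.leftSet.card = 1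

/-- The number of directed edges traversed by the trek. -/
def nEdges (π : G.Trek) : ℕ := (π.left.length - 1) + (π.right.length - 1)

end Trek

/-- `htr v`: the set of nodes `w ∉ {v} ∪ sib(v)` reachable from `v` by a half-trek
containing at least one directed edge. -/
def htr (G : MixedGraph V) (v : V) : Set V :=
  {w | w ≠ v ∧ w ∉ G.sib v ∧
    ∃ π : G.Trek, π.source = v ∧ π.target = w ∧ π.IsHalfTrek ∧ 1 ≤ π.nEdges}

/-- `f` encodes a system of treks from `Y` to `P`: treks with pairwise distinct sources
forming `Y` and pairwise distinct targets forming `P`. -/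
def IsTrekSystem (G : MixedGraph V) (Y P : Finset V) (f : V → G.Trek) : Prop :=
  (∀ y ∈ Y, (f y).source = y) ∧
  (Y.image fun y => (f y).target) = P ∧
  ∀ y ∈ Y, ∀ y' ∈ Y, y ≠ y' → (f y).target ≠ (f y').target

/-- The treks `f y`, `y ∈ Y`, have no sided intersection. -/
def NoSidedIntersection (G : MixedGraph V) (Y : Finset V) (f : V → G.Trek) : Prop :=
  ∀ y ∈ Y, ∀ y' ∈ Y, y ≠ y' →
    Disjoint (f y).leftSet (f y').leftSet ∧ Disjoint (f y).rightSet (f y').rightSet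

/-- `Y` satisfies the half-trek criterion with respect to `v`. -/
def SatisfiesHTC (G : MixedGraph V) (v : V) (Y : Finset V) : Prop :=
  Y.card = (G.pa v).card ∧
  (∀ y ∈ Y, y ≠ v ∧ y ∉ G.sib v) ∧
  ∃ f : V → G.Trek, (∀ y ∈ Y, (f y).IsHalfTrek) ∧
    G.IsTrekSystem Y (G.pa v) f ∧ G.NoSidedIntersection Y f

/-- `Y` satisfies the weak half-trek criterion with respect to `v`. -/
def SatisfiesWeakHTC (G : MixedGraph V) (v : V) (Y : Finset V) : Prop :=
  Y.card = (G.pa v).card ∧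
  (∀ y ∈ Y, y ≠ v ∧ y ∉ G.sib v) ∧
  ∃ f : V → G.Trek, (∀ y ∈ Y, y ∈ G.htr v → (f y).IsHalfTrek) ∧
    G.IsTrekSystem Y (G.pa v) f ∧ G.NoSidedIntersection Y f

/-- `G` is HTC-identifiable. -/
def HTCIdentifiable (G : MixedGraph V) : Prop :=
  ∃ Y : V → Finset V,
    (∀ v, G.SatisfiesHTC v (Y v)) ∧
    ∃ r : V → V → Prop, IsStrictTotalOrder V r ∧
      ∀ v w, w ∈ Y v → w ∈ G.htr v → r w v

/-- `G` is HTC-infinite-to-one. -/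
def HTCInfiniteToOne (G : MixedGraph V) : Prop :=
  ∀ Y : V → Finset V,
    (∃ v, ¬ G.SatisfiesHTC v (Y v)) ∨ ∃ v w, v ∈ Y w ∧ w ∈ Y v

/-- `G` is acyclic: no directed cycle can be formed from the edges in `D`. -/
def Acyclic (G : MixedGraph V) : Prop :=
  ∀ v : V, ¬ Relation.TransGen (fun a b => (a, b) ∈ G.D) v v

/-- `G` is simple: at most one edge between any pair of nodes. -/
def Simple (G : MixedGraph V) : Prop :=
  (∀ e ∈ G.D, e ∉ G.B) ∧ ∀ v w : V, (v, w) ∈ G.D → (w, v) ∉ G.D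

/-- `ℝ^D_reg`: real matrices supported on `D` with `I - Λ` invertible. -/
def RDreg (G : MixedGraph V) : Set (Matrix V V ℝ) :=
  {Λ | (∀ v w, (v, w) ∉ G.D → Λ v w = 0) ∧ IsUnit (1 - Λ).det}

/-- `PD(B)`: positive definite symmetric matrices supported on the diagonal and `B`. -/
def PDB (G : MixedGraph V) : Set (Matrix V V ℝ) :=
  {Ω | Ω.PosDef ∧ ∀ v w, v ≠ w → (v, w) ∉ G.B → Ω v w = 0}

/-- The parameter space `Θ = ℝ^D_reg × PD(B)`. -/
def Theta (G : MixedGraph V) : Set (Matrix V V ℝ × Matrix V V ℝ) :=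
  {θ | θ.1 ∈ G.RDreg ∧ θ.2 ∈ G.PDB}

/-- The parametrization `φ(Λ, Ω) = (I-Λ)^{-T} Ω (I-Λ)^{-1}`. -/
noncomputable def phi {R : Type*} [CommRing R] (Λ Ω : Matrix V V R) : Matrix V V R :=
  ((1 - Λ)⁻¹)ᵀ * Ω * (1 - Λ)⁻¹

/-- Evaluation of a polynomial in the coordinates `λ_vw` (left summand) and `ω_vw`
(right summand) at a parameter point `θ = (Λ, Ω)`. -/
noncomputable def evalParam (θ : Matrix V V ℝ × Matrix V V ℝ)
    (p : MvPolynomial ((V × V) ⊕ (V × V)) ℝ) : ℝ :=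
  MvPolynomial.eval (Sum.elim (fun e => θ.1 e.1 e.2) (fun e => θ.2 e.1 e.2)) p

/-- `V₀` is a proper algebraic subset of `Θ`: the intersection with `Θ` of the zero set of a
polynomial in the coordinates that does not vanish identically on `Θ`. -/
def IsProperAlgebraic (G : MixedGraph V)
    (V₀ : Set (Matrix V V ℝ × Matrix V V ℝ)) : Prop :=
  ∃ p : MvPolynomial ((V × V) ⊕ (V × V)) ℝ,
    (∃ θ ∈ G.Theta, evalParam θ p ≠ 0) ∧
    V₀ = {θ ∈ G.Theta | evalParam θ p = 0}

/-- Evaluation of a polynomial in the entries of a covariance matrix. -/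
noncomputable def evalAtCov (S : Matrix V V ℝ) (p : MvPolynomial (V × V) ℝ) : ℝ :=
  MvPolynomial.eval (fun e => S e.1 e.2) p

/-- `G` is rationally identifiable: some rational map `ψ` (each coordinate a quotient of
polynomials in the entries of the covariance matrix) satisfies `ψ ∘ φ_G = id` off a proper
algebraic subset of `Θ`. -/
def RationallyIdentifiable (G : MixedGraph V) : Prop :=
  ∃ V₀, G.IsProperAlgebraic V₀ ∧
    ∃ p q : ((V × V) ⊕ (V × V)) → MvPolynomial (V × V) ℝ,
      ∀ θ ∈ G.Theta \ V₀,
        (∀ i, evalAtCov (phi θ.1 θ.2) (q i) ≠ 0) ∧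
        (∀ v w : V, θ.1 v w * evalAtCov (phi θ.1 θ.2) (q (Sum.inl (v, w)))
            = evalAtCov (phi θ.1 θ.2) (p (Sum.inl (v, w)))) ∧
        (∀ v w : V, θ.2 v w * evalAtCov (phi θ.1 θ.2) (q (Sum.inr (v, w)))
            = evalAtCov (phi θ.1 θ.2) (p (Sum.inr (v, w))))

/-- `G` is generically identifiable: `φ_G` is injective off a proper algebraic subset. -/
def GenericallyIdentifiable (G : MixedGraph V) : Prop :=
  ∃ V₀, G.IsProperAlgebraic V₀ ∧
    Set.InjOn (fun θ : Matrix V V ℝ × Matrix V V ℝ => phi θ.1 θ.2) (G.Theta \ V₀)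

/-- `φ_G` is generically infinite-to-one. -/
def GenInfiniteToOne (G : MixedGraph V) : Prop :=
  ∃ V₀, G.IsProperAlgebraic V₀ ∧
    ∀ θ ∈ G.Theta \ V₀,
      {θ' ∈ G.Theta | phi θ'.1 θ'.2 = phi θ.1 θ.2}.Infinite

end MixedGraph

/-!
Since `φ(Λ, Ω)(I-Λ) = (Ω(I-Λ)⁻¹)ᵀ`, for `y ∈ Y_v` the row of `y` in either `φ(Λ, Ω)` or
`Ω(I-Λ)⁻¹ = (I-Λ)ᵀφ(Λ, Ω)` is annihilated by column `v` of `I-Λ`: the first if `y ∉ htr(v)`, the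
second because `ω_yv = 0`. This is a square linear system for the column `v` of `Λ`, and its
coefficients are rational in `φ(Λ, Ω)` once the columns of all `y ∈ Y_v ∩ htr(v)` have been found.

Its determinant is generically nonzero because it is nonzero at one point of the linear span of
`Θ`. Reroute the half-treks of the criterion so that the sources lying on each other's paths are
stratified by a depth function, and give weight one to the edges used and weight zero to the
others: then the matrix is triangular with nonzero diagonal with respect to the lexicographic order
on pairs of a depth and a position along a path.
-/

section LinearAlgebra

lemma det_ne_zero_of_wellFounded {ι R : Type*} [Fintype ι] [DecidableEq ι] [CommRing R]
    [IsDomain R] {A : Matrix ι ι R} {r : ι → ι → Prop} (hr : WellFounded r)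
    (hdiag : ∀ i, A i i ≠ 0) (hA : ∀ i j, A i j ≠ 0 → j = i ∨ r j i) : A.det ≠ 0 := by
  intro hdet
  obtain ⟨x, hx, hAx⟩ := Matrix.exists_mulVec_eq_zero_iff.2 hdet
  refine hx (funext fun i => hr.induction (C := fun i => x i = 0) i fun i ih => ?_)
  have hrow : ∑ j, A i j * x j = A i i * x i := by
    refine Finset.sum_eq_single i (fun j _ hji => ?_) (by simp)
    by_cases hij : A i j = 0
    · rw [hij, zero_mul]
    · rw [ih j ((hA i j hij).resolve_left hji), mul_zero]
  exact (mul_eq_zero.1 (hrow.symm.trans (congrFun hAx i))).resolve_left (hdiag i)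

lemma posDef_of_sum_abs_lt_diag {n : Type*} [Fintype n] [DecidableEq n] {A : Matrix n n ℝ}
    (hA : A.IsHermitian) (hdom : ∀ i, ∑ j ∈ Finset.univ.erase i, |A i j| < A i i) :
    A.PosDef := by
  refine hA.posDef_iff_eigenvalues_pos.2 fun i => ?_
  have heig : Module.End.HasEigenvalue (Matrix.toLin' A) (hA.eigenvalues i) := by
    rw [Module.End.hasEigenvalue_iff_mem_spectrum, Matrix.spectrum_toLin']
    exact hA.eigenvalues_mem_spectrum_real i
  obtain ⟨k, hk⟩ := eigenvalue_mem_ball heig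
  have hdist := (abs_le.1 (Metric.mem_closedBall.1 hk)).1
  simp only [Real.norm_eq_abs] at hdist
  linarith [hdom k]

lemma eventually_posDef_add_smul_one {n : Type*} [Finite n] [DecidableEq n]
    {A : Matrix n n ℝ} (hA : A.IsHermitian) :
    ∀ᶠ t : ℝ in Filter.atTop, (A + t • (1 : Matrix n n ℝ)).PosDef := by
  have := Fintype.ofFinite n
  have hdom : ∀ᶠ t : ℝ in Filter.atTop, ∀ i, ∑ j ∈ Finset.univ.erase i, |A i j| < A i i + t :=
    Filter.eventually_all.2 fun i => by
      filter_upwards [Filter.eventually_gt_atTop (∑ j ∈ Finset.univ.erase i, |A i j| - A i i)]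
        with t ht using by linarith
  filter_upwards [hdom] with t ht
  have hsymm : (A + t • (1 : Matrix n n ℝ)).IsHermitian :=
    hA.add (Matrix.isHermitian_one.smul (IsSelfAdjoint.all t))
  refine posDef_of_sum_abs_lt_diag hsymm fun i => ?_
  have hoff : ∀ j ∈ Finset.univ.erase i,
        |(A + t • (1 : Matrix n n ℝ)) i j| = |A i j| := fun j hj => by
      simp [Matrix.one_apply_ne (Finset.ne_of_mem_erase hj).symm]
  rw [Finset.sum_congr rfl hoff]
  simpa using ht i

lemma exists_apply_ne_zero_of_mul_apply_ne_zero {l m n R : Type*} [Fintype m]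
    [NonUnitalNonAssocSemiring R] {A : Matrix l m R} {B : Matrix m n R} {i : l} {j : n}
    (h : (A * B) i j ≠ 0) : ∃ k, A i k ≠ 0 ∧ B k j ≠ 0 := by
  rw [Matrix.mul_apply] at h
  obtain ⟨k, -, hk⟩ := Finset.exists_ne_zero_of_sum_ne_zero h
  exact ⟨k, left_ne_zero_of_mul hk, right_ne_zero_of_mul hk⟩

lemma reflTransGen_of_inv_one_sub_apply_ne_zero {n R : Type*} [Fintype n] [DecidableEq n]
    [CommRing R] {A : Matrix n n R} (hA : IsUnit (1 - A).det) {i j : n}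
    (h : (1 - A)⁻¹ i j ≠ 0) : Relation.ReflTransGen (fun k l => A k l ≠ 0) i j := by
  by_contra hij
  have := ((Matrix.isUnit_iff_isUnit_det _).2 hA).invertible
  let block (k : n) : Prop := ¬ Relation.ReflTransGen (fun k l => A k l ≠ 0) k j
  have hblock : (1 - A).BlockTriangular block := by
    intro k l hkl
    obtain ⟨hk, hl⟩ : block k ∧ ¬ block l := Classical.not_imp.1 hkl.not_ge
    have hne : k ≠ l := by rintro rfl; exact hl hk
    have hkl : A k l = 0 := by
      by_contra hkl
      exact hk (.head hkl (not_not.1 hl))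
    rw [Matrix.sub_apply, Matrix.one_apply_ne hne, hkl, sub_zero]
  exact h (Matrix.blockTriangular_inv_of_blockTriangular hblock
    (lt_of_le_not_ge (fun hj => absurd .refl hj) fun hle => hle hij .refl))

section Nonneg

variable {l m n R : Type*} [Fintype m] [Semiring R] [PartialOrder R]
  {A : Matrix l m R} {B : Matrix m n R}

lemma mul_apply_nonneg [IsOrderedRing R] (hA : ∀ i j, 0 ≤ A i j) (hB : ∀ i j, 0 ≤ B i j)
    (i : l) (j : n) : 0 ≤ (A * B) i j :=
  Finset.sum_nonneg fun k _ => mul_nonneg (hA i k) (hB k j)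

lemma mul_apply_pos [IsStrictOrderedRing R] (hA : ∀ i j, 0 ≤ A i j) (hB : ∀ i j, 0 ≤ B i j)
    {i : l} {k : m} {j : n} (hik : 0 < A i k) (hkj : 0 < B k j) : 0 < (A * B) i j :=
  Finset.sum_pos' (fun k _ => mul_nonneg (hA i k) (hB k j))
    ⟨k, Finset.mem_univ k, mul_pos hik hkj⟩

end Nonneg

variable {X R S : Type*} [CommRing R] [SetLike S (X → R)] [SubringClass S (X → R)] {s : S}

lemma mul_apply_mem {l m n : Type*} [Fintype m] {A : X → Matrix l m R} {B : X → Matrix m n R}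
    {i : l} {j : n} (hA : ∀ k, (A · i k) ∈ s) (hB : ∀ k, (B · k j) ∈ s) :
    (fun x => (A x * B x) i j) ∈ s := by
  convert sum_mem (S := s) (t := Finset.univ) fun k _ => mul_mem (hA k) (hB k) using 1
  ext x
  simp [Matrix.mul_apply]

lemma one_sub_apply_mem {n : Type*} [DecidableEq n] {A : X → Matrix n n R} {i j : n}
    (hA : (A · i j) ∈ s) : (fun x => (1 - A x) i j) ∈ s := by
  simp only [Matrix.sub_apply, Matrix.one_apply]
  split_ifs
  exacts [sub_mem (one_mem s) hA, sub_mem (zero_mem s) hA]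

lemma det_mem {n : Type*} [Fintype n] [DecidableEq n] {A : X → Matrix n n R}
    (hA : ∀ i j, (A · i j) ∈ s) : (fun x => (A x).det) ∈ s := by
  convert sum_mem (S := s) (t := Finset.univ) fun σ : Equiv.Perm n => fun _ =>
    mul_mem (intCast_mem s (Equiv.Perm.sign σ : ℤ))
      (prod_mem fun i (_ : i ∈ Finset.univ) => hA (σ i) i) using 1
  ext x
  simp [Matrix.det_apply']

lemma adjugate_apply_mem {n : Type*} [Fintype n] [DecidableEq n] {A : X → Matrix n n R}
    (hA : ∀ i j, (A · i j) ∈ s) (i j : n) : (fun x => (A x).adjugate i j) ∈ s := by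
  simp only [Matrix.adjugate_apply]
  refine det_mem fun k l => ?_
  by_cases hk : k = j
  · subst hk
    simp only [Matrix.updateRow_self, Pi.single_apply]
    split_ifs
    exacts [one_mem s, zero_mem s]
  · simpa only [Matrix.updateRow_ne hk] using hA k l

lemma eventually_cofinite_eval_add_smul_ne_zero {σ : Type*} [IsDomain R]
    (P : MvPolynomial σ R) (x d : σ → R) {t₀ : R}
    (h : MvPolynomial.eval (x + t₀ • d) P ≠ 0) :
    ∀ᶠ t : R in Filter.cofinite, MvPolynomial.eval (x + t • d) P ≠ 0 := by
  let g : σ → Polynomial R := fun i => Polynomial.C (x i) + Polynomial.X * Polynomial.C (d i)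
  let f := MvPolynomial.eval₂ Polynomial.C g P
  have hf : ∀ t : R, f.eval t = MvPolynomial.eval (x + t • d) P := fun t => by
    have hC : (Polynomial.evalRingHom t).comp Polynomial.C = RingHom.id R :=
      RingHom.ext fun a => Polynomial.eval_C
    have hg : (fun i => (g i).eval t) = x + t • d := by
      ext i
      simp only [g, Polynomial.eval_add, Polynomial.eval_C, Polynomial.eval_mul,
        Polynomial.eval_X, Pi.add_apply, Pi.smul_apply, smul_eq_mul]
    rw [MvPolynomial.polynomial_eval_eval₂, hC, hg, MvPolynomial.eval₂_id]
  have hf₀ : f ≠ 0 := fun hf₀ => h (by rw [← hf, hf₀, Polynomial.eval_zero])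
  have hroots := (Polynomial.finite_setOfPred_isRoot hf₀).eventually_cofinite_notMem
  filter_upwards [hroots] with t ht
  rw [← hf]
  exact ht

end LinearAlgebra

section Lists

variable {α : Type*}

lemma exists_suffix_head?_eq {a : α} {l : List α} (ha : a ∈ l) :
    ∃ l', l' <:+ l ∧ l'.head? = some a ∧ l'.getLast? = l.getLast? := by
  obtain ⟨s, t, rfl⟩ := List.append_of_mem ha
  exact ⟨a :: t, List.suffix_append s _, rfl, (List.getLast?_append_cons s a t).symm⟩

lemma exists_nodup_isChain {E : α → α → Prop} {l : List α} (hl : l.IsChain E) :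
    ∃ l', l'.IsChain E ∧ l'.Nodup ∧ l' ⊆ l ∧ l'.head? = l.head? ∧ l'.getLast? = l.getLast? := by
  induction l with
  | nil => exact ⟨[], hl, List.nodup_nil, by simp, rfl, rfl⟩
  | cons a l ih =>
    obtain ⟨hhead, hl⟩ := List.isChain_cons.1 hl
    obtain ⟨l', hchain, hnodup, hsub, hhead', hlast⟩ := ih hl
    by_cases ha : a ∈ l'
    · obtain ⟨s, hs, hsa, hslast⟩ := exists_suffix_head?_eq ha
      have hl_ne : l ≠ [] := List.ne_nil_of_mem (hsub ha)
      refine ⟨s, hchain.suffix hs, hnodup.sublist hs.sublist,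
        fun b hb => .tail a (hsub (hs.subset hb)), hsa, ?_⟩
      rw [hslast, hlast, List.getLast?_cons_of_ne_nil hl_ne]
    · refine ⟨a :: l', List.isChain_cons.2 ⟨hhead'.symm ▸ hhead, hchain⟩,
        List.nodup_cons.2 ⟨ha, hnodup⟩, List.cons_subset_cons a hsub, rfl, ?_⟩
      rw [List.getLast?_cons, List.getLast?_cons, hlast]

end Lists

lemma exists_distance_to_periodicPts {ι : Type*} [Finite ι] (g : ι → ι) : ∃ d : ι → ℕ, ∀ i,
    (i ∈ Function.periodicPts g → d i = 0) ∧
      (i ∉ Function.periodicPts g → d i = d (g i) + 1) := by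
  have hentry (i : ι) : ∃ n, g^[n] i ∈ Function.periodicPts g := by
    obtain ⟨m, n, hmn, heq⟩ := Finite.exists_ne_map_eq_of_infinite fun n => g^[n] i
    wlog hlt : m < n generalizing m n
    · exact this n m hmn.symm heq.symm (by omega)
    refine ⟨m, Function.mk_mem_periodicPts (Nat.sub_pos_of_lt hlt) ?_⟩
    rw [Function.IsPeriodicPt, Function.IsFixedPt, ← Function.iterate_add_apply,
      Nat.sub_add_cancel hlt.le, ← heq]
  exact ⟨fun i => Nat.find (hentry i), fun i => ⟨fun hi => (Nat.find_eq_zero _).2 hi,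
    fun hi => Nat.find_comp_succ (hentry i) (hentry (g i)) hi⟩⟩

namespace MixedGraph

section Paths

variable {V ι : Type*} {E : V → V → Prop}

/-- A family of pairwise vertex-disjoint simple paths of the relation `E`, given as lists of
vertices; `path i` leads from `top i` to `bot i`. -/
structure IsPathSystem (E : V → V → Prop) (path : ι → List V) (top bot : ι → V) : Prop where
  isChain : ∀ i, (path i).IsChain E
  nodup : ∀ i, (path i).Nodup
  eq_of_mem : ∀ {i j u}, u ∈ path i → u ∈ path j → i = j
  head?_eq : ∀ i, (path i).head? = some (top i)
  getLast?_eq : ∀ i, (path i).getLast? = some (bot i)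

namespace IsPathSystem

variable {path : ι → List V} {top bot : ι → V}

lemma top_mem (h : IsPathSystem E path top bot) (i : ι) : top i ∈ path i :=
  List.mem_of_head? (h.head?_eq i)

lemma bot_mem (h : IsPathSystem E path top bot) (i : ι) : bot i ∈ path i :=
  List.mem_of_getLast? (h.getLast?_eq i)

lemma exists_truncation (h : IsPathSystem E path top bot) {τ : ι → ι}
    (hτ : Function.Injective τ) {src : ι → V} (hsrc : ∀ i, src i ∈ path (τ i) ∨ τ i = i) :
    ∃ (path' : ι → List V) (top' : ι → V), IsPathSystem E path' top' (bot ∘ τ) ∧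
      ∀ i, path' i ⊆ path (τ i) ∧ (top' i = src i ∨ top' i = top i) ∧
        (src i ∈ path (τ i) → top' i = src i) := by
  have hsuffix (i : ι) : ∃ l t, l <:+ path (τ i) ∧ l.head? = some t ∧
      l.getLast? = some (bot (τ i)) ∧ (t = src i ∨ t = top i) ∧
      (src i ∈ path (τ i) → t = src i) := by
    by_cases hi : src i ∈ path (τ i)
    · obtain ⟨l, hl, hhead, hlast⟩ := exists_suffix_head?_eq hi
      exact ⟨l, src i, hl, hhead, hlast.trans (h.getLast?_eq _), .inl rfl, fun _ => rfl⟩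
    · exact ⟨path (τ i), top (τ i), List.suffix_rfl, h.head?_eq _, h.getLast?_eq _,
        .inr (by rw [(hsrc i).resolve_left hi]), fun hi' => absurd hi' hi⟩
  choose path' top' hsuf hhead hlast htop htop_src using hsuffix
  exact ⟨path', top',
    { isChain := fun i => (h.isChain _).suffix (hsuf i)
      nodup := fun i => (h.nodup _).sublist (hsuf i).sublist
      eq_of_mem := fun hi hj => hτ (h.eq_of_mem ((hsuf _).subset hi) ((hsuf _).subset hj))
      head?_eq := hhead
      getLast?_eq := hlast },
    fun i => ⟨(hsuf i).subset, htop i, htop_src i⟩⟩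

/- Let `i` point to the path that contains `src i`. Following the pointers leads into a cycle;
along the cycles the tails of the paths are exchanged, which makes each path on a cycle start at
its own source, and `depth` is the distance from the cycles. -/
lemma exists_rerouting [Finite ι] (h : IsPathSystem E path top bot) (src : ι → V) :
    ∃ (path' : ι → List V) (top' bot' : ι → V) (depth : ι → ℕ),
      IsPathSystem E path' top' bot' ∧ (∀ i, top' i = src i ∨ top' i = top i) ∧
      Set.range bot' = Set.range bot ∧
      ∀ i j, src i ∈ path' j → (j = i ∧ top' i = src i) ∨ depth i = depth j + 1 := by
  have hpointer (i : ι) : ∃ j, src i ∈ path j ∨ j = i ∧ ∀ k, src i ∉ path k := by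
    by_cases hi : ∃ j, src i ∈ path j
    · exact hi.imp fun j => .inl
    · exact ⟨i, .inr ⟨rfl, not_exists.1 hi⟩⟩
  choose g hg using hpointer
  have g_eq {i j : ι} (hij : src i ∈ path j) : g i = j :=
    (hg i).elim (fun hgi => h.eq_of_mem hgi hij) fun hgi => absurd hij (hgi.2 j)
  let C := Function.periodicPts g
  obtain ⟨depth, hdepth⟩ := exists_distance_to_periodicPts g
  let τ := C.piecewise g id
  have τ_of_mem {i : ι} (hi : i ∈ C) : τ i = g i := Set.piecewise_eq_of_mem _ _ _ hi
  have τ_of_notMem {i : ι} (hi : i ∉ C) : τ i = i := Set.piecewise_eq_of_notMem _ _ _ hi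
  have hbij : Set.BijOn g C C := Function.bijOn_periodicPts g
  have hτ : Function.Injective τ := (Set.injective_piecewise_iff _).2
    ⟨hbij.injOn, Function.injective_id.injOn,
      fun i hi j hj (hij : g i = j) => hj (hij ▸ hbij.mapsTo hi)⟩
  obtain ⟨path', top', h', hpath'⟩ := h.exists_truncation hτ fun i => by
    by_cases hi : i ∈ C
    · exact τ_of_mem hi ▸ (hg i).imp_right And.left
    · exact .inr (τ_of_notMem hi)
  refine ⟨path', top', bot ∘ τ, depth, h', fun i => (hpath' i).2.1,
    (Finite.injective_iff_surjective.1 hτ).range_comp bot, fun i j hij => ?_⟩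
  have hgi : g i = τ j := g_eq ((hpath' j).1 hij)
  by_cases hi : i ∈ C
  · have hj : j ∈ C := by
      by_contra hj
      exact hj (τ_of_notMem hj ▸ hgi ▸ hbij.mapsTo hi)
    obtain rfl : j = i := hbij.injOn hj hi (by rw [hgi, τ_of_mem hj])
    exact .inl ⟨rfl, (hpath' j).2.2 ((hpath' j).1 hij)⟩
  · right
    rw [(hdepth i).2 hi, hgi]
    by_cases hj : j ∈ C
    · rw [τ_of_mem hj, (hdepth j).1 hj, (hdepth (g j)).1 (hbij.mapsTo hj)]
    · rw [τ_of_notMem hj]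

/-- The position of the vertex `u` on the path of the family containing it; `0` if there is no
such path. -/
noncomputable def pos (path : ι → List V) (u : V) : ℕ :=
  if h : ∃ i, u ∈ path i then (path h.choose).idxOf u else 0

/-- `b` is the successor of `a` on a path of the family. -/
def Step (path : ι → List V) (a b : V) : Prop :=
  ∃ i, a ∈ path i ∧ b ∈ path i ∧ pos path b = pos path a + 1

/-- The reflexive transitive closure of `Step path`, in terms of positions. -/
def Precedes (path : ι → List V) (a b : V) : Prop :=
  a = b ∨ ∃ i, a ∈ path i ∧ b ∈ path i ∧ pos path a ≤ pos path b

variable {i : ι} {a b c : V}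

lemma Step.not_precedes (hac : Step path a c) : ¬ Precedes path c a := by
  obtain ⟨i, -, -, hpos⟩ := hac
  rintro (rfl | ⟨-, -, -, hle⟩) <;> omega

lemma pos_eq_idxOf (h : IsPathSystem E path top bot) (ha : a ∈ path i) :
    pos path a = (path i).idxOf a := by
  have hex : ∃ j, a ∈ path j := ⟨i, ha⟩
  rw [pos, dif_pos hex, h.eq_of_mem hex.choose_spec ha]

lemma eq_of_pos_eq (h : IsPathSystem E path top bot) (ha : a ∈ path i) (hb : b ∈ path i)
    (hab : pos path a = pos path b) : a = b := by
  rw [h.pos_eq_idxOf ha, h.pos_eq_idxOf hb] at hab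
  exact (List.idxOf_inj ha).1 hab

lemma pos_top (h : IsPathSystem E path top bot) (i : ι) : pos path (top i) = 0 := by
  obtain ⟨l, hl⟩ := List.head?_eq_some_iff.1 (h.head?_eq i)
  rw [h.pos_eq_idxOf (h.top_mem i), hl, List.idxOf_cons_self]

lemma precedes_top_bot (h : IsPathSystem E path top bot) (i : ι) :
    Precedes path (top i) (bot i) :=
  .inr ⟨i, h.top_mem i, h.bot_mem i, (h.pos_top i).symm ▸ Nat.zero_le _⟩

lemma rel_of_step (h : IsPathSystem E path top bot) (hab : Step path a b) : E a b := by
  obtain ⟨i, ha, hb, hpos⟩ := hab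
  rw [h.pos_eq_idxOf ha, h.pos_eq_idxOf hb] at hpos
  have hlt := List.idxOf_lt_length_of_mem hb
  have := List.isChain_iff_getElem.1 (h.isChain i) _ (hpos ▸ hlt)
  simpa [← hpos] using this

lemma eq_of_step (h : IsPathSystem E path top bot) (hb : Step path a b) (hc : Step path a c) :
    b = c := by
  obtain ⟨i, hai, hb, hposb⟩ := hb
  obtain ⟨j, haj, hc, hposc⟩ := hc
  obtain rfl := h.eq_of_mem hai haj
  exact h.eq_of_pos_eq hb hc (hposb.trans hposc.symm)

lemma exists_step_of_pos_lt (h : IsPathSystem E path top bot) (ha : a ∈ path i)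
    (hb : b ∈ path i) (hab : pos path a < pos path b) : ∃ c, Step path a c := by
  have hlt : pos path a + 1 < (path i).length := by
    have := List.idxOf_lt_length_of_mem hb
    rw [← h.pos_eq_idxOf hb] at this
    omega
  have hmem := List.getElem_mem hlt
  exact ⟨(path i)[pos path a + 1], i, ha, hmem,
    (h.pos_eq_idxOf hmem).trans ((h.nodup i).idxOf_getElem _ hlt)⟩

lemma eq_of_precedes_of_forall_not_step (h : IsPathSystem E path top bot)
    (hab : Precedes path a b) (ha : ∀ c, ¬ Step path a c) : a = b := by
  obtain rfl | ⟨i, hai, hbi, hle⟩ := hab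
  · rfl
  · refine h.eq_of_pos_eq hai hbi (hle.eq_of_not_lt fun hlt => ?_)
    obtain ⟨c, hc⟩ := h.exists_step_of_pos_lt hai hbi hlt
    exact ha c hc

lemma precedes_iff_of_step (h : IsPathSystem E path top bot) (hac : Step path a c) :
    Precedes path a b ↔ a = b ∨ Precedes path c b := by
  obtain ⟨i, hai, hci, hpos⟩ := hac
  constructor
  · rintro (rfl | ⟨j, haj, hbj, hle⟩)
    · exact .inl rfl
    · obtain rfl := h.eq_of_mem hai haj
      obtain heq | hlt := hle.eq_or_lt
      · exact .inl (h.eq_of_pos_eq hai hbj heq)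
      · exact .inr (.inr ⟨i, hci, hbj, hpos.trans_le hlt⟩)
  · rintro (rfl | rfl | ⟨j, hcj, hbj, hle⟩)
    · exact .inl rfl
    · exact .inr ⟨i, hai, hci, by omega⟩
    · obtain rfl := h.eq_of_mem hci hcj
      exact .inr ⟨i, hai, hbj, by omega⟩

lemma mem_of_precedes (h : IsPathSystem E path top bot) (hab : Precedes path a b) :
    a ∈ path i ↔ b ∈ path i := by
  obtain rfl | ⟨j, ha, hb, -⟩ := hab
  · rfl
  · exact ⟨fun hai => h.eq_of_mem ha hai ▸ hb, fun hbi => h.eq_of_mem hb hbi ▸ ha⟩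

end IsPathSystem

end Paths

section SpecialPoint

open IsPathSystem

variable {V ι : Type*} {E : V → V → Prop}

/-- The `0`/`1` matrix of a relation. -/
noncomputable def relMatrix (P : V → V → Prop) : Matrix V V ℝ :=
  Matrix.of fun a b => if P a b then 1 else 0

lemma relMatrix_nonneg (P : V → V → Prop) (a b : V) : 0 ≤ relMatrix P a b := by
  rw [relMatrix, Matrix.of_apply]
  split_ifs
  exacts [zero_le_one, le_rfl]

lemma relMatrix_pos {P : V → V → Prop} {a b : V} (h : P a b) : 0 < relMatrix P a b := by
  rw [relMatrix, Matrix.of_apply, if_pos h]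
  exact one_pos

lemma of_relMatrix_ne_zero {P : V → V → Prop} {a b : V} (h : relMatrix P a b ≠ 0) : P a b := by
  by_contra hP
  exact h (if_neg hP)

/-- `a` and `b` are the two ends of the edge that links some source `src i` to the start `top i`
of its path. -/
def Link (src top : ι → V) (a b : V) : Prop :=
  ∃ i, s(a, b) = s(src i, top i)

variable {path : ι → List V} {top bot : ι → V} {src : ι → V} {depth : ι → ℕ} {i j : ι}

lemma IsPathSystem.eq_or_lex_of_precedes (h : IsPathSystem E path top bot)
    (hsrc : Function.Injective src)
    (hdepth : ∀ i j, src i ∈ path j → (j = i ∧ top i = src i) ∨ depth i = depth j + 1)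
    (hij : Precedes path (src j) (src i)) :
    j = i ∨ Prod.Lex (· < ·) (· < ·) (depth j, pos path (src j)) (depth i, pos path (src i)) := by
  obtain heq | ⟨k, hj, hi, hle⟩ := hij
  · exact .inl (hsrc heq)
  rw [Prod.lex_def]
  obtain heq | hlt := hle.eq_or_lt
  · exact .inl (hsrc (h.eq_of_pos_eq hj hi heq))
  obtain ⟨rfl, -⟩ | hjk := hdepth j k hj <;> obtain ⟨rfl, htop⟩ | hik := hdepth i k hi
  · exact .inl rfl
  · exact .inr (.inl (by omega))
  · rw [← htop, h.pos_top] at hlt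
    exact absurd hlt (Nat.not_lt_zero _)
  · exact .inr (.inr ⟨by omega, hlt⟩)

variable [Fintype V] [DecidableEq V]

lemma IsPathSystem.relMatrix_precedes_eq (h : IsPathSystem E path top bot) :
    relMatrix (Precedes path) = 1 + relMatrix (Step path) * relMatrix (Precedes path) := by
  ext a b
  rw [Matrix.add_apply, Matrix.mul_apply]
  by_cases ha : ∃ c, Step path a c
  · obtain ⟨c, hac⟩ := ha
    have hsum : ∑ k, relMatrix (Step path) a k * relMatrix (Precedes path) k b =
        relMatrix (Precedes path) c b := by
      refine (Finset.sum_eq_single c (fun k _ hkc => ?_) (by simp)).trans ?_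
      · rw [relMatrix, Matrix.of_apply, if_neg fun hak => hkc (h.eq_of_step hak hac), zero_mul]
      · rw [relMatrix, Matrix.of_apply, if_pos hac, one_mul]
    rw [hsum]
    obtain rfl | hab := eq_or_ne a b
    · simp [relMatrix, h.precedes_iff_of_step hac, hac.not_precedes]
    · simp [relMatrix, h.precedes_iff_of_step hac, hab]
  · push Not at ha
    have hiff : Precedes path a b ↔ a = b :=
      ⟨fun hab => h.eq_of_precedes_of_forall_not_step hab ha, .inl⟩
    simp [relMatrix, ha, hiff, Matrix.one_apply]

lemma IsPathSystem.one_sub_relMatrix_step_mul (h : IsPathSystem E path top bot) :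
    (1 - relMatrix (Step path)) * relMatrix (Precedes path) = 1 := by
  rw [sub_mul, one_mul, sub_eq_iff_eq_add, ← h.relMatrix_precedes_eq]

/-- The matrix with rows indexed by the sources `src i`: row `i` lists the weights of the
half-treks from `src i`, i.e. a row of `Ω(I-Λ)⁻¹`, if `H i`, and the weights of all the treks
from `src i`, i.e. a row of `φ(Λ, Ω)`, otherwise. -/
noncomputable def trekRows (H : ι → Prop) (src : ι → V) (θ : Matrix V V ℝ × Matrix V V ℝ) :
    Matrix ι V ℝ :=
  Matrix.of fun i b =>
    if H i then (θ.2 * (1 - θ.1)⁻¹) (src i) b else phi θ.1 θ.2 (src i) b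

/-- The parameter point at which every path edge and every link edge has weight one, and the
remaining edges have weight zero. -/
noncomputable def unitPoint (path : ι → List V) (src top : ι → V) :
    Matrix V V ℝ × Matrix V V ℝ :=
  (relMatrix (Step path), relMatrix (Link src top))

namespace IsPathSystem

variable {H : ι → Prop}

lemma trekRows_unitPoint (h : IsPathSystem E path top bot) (H : ι → Prop) (src : ι → V) (i : ι)
    (b : V) : trekRows H src (unitPoint path src top) i b =
      if H i then (relMatrix (Link src top) * relMatrix (Precedes path)) (src i) b
      else ((relMatrix (Precedes path))ᵀ * relMatrix (Link src top) *
        relMatrix (Precedes path)) (src i) b := by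
  simp only [trekRows, Matrix.of_apply, phi, unitPoint,
    Matrix.inv_eq_right_inv h.one_sub_relMatrix_step_mul]

lemma trekRows_unitPoint_bot_pos (h : IsPathSystem E path top bot) (H : ι → Prop) (src : ι → V)
    (i : ι) : 0 < trekRows H src (unitPoint path src top) i (bot i) := by
  have hlink : 0 < relMatrix (Link src top) (src i) (top i) := relMatrix_pos ⟨i, rfl⟩
  have hprec := relMatrix_pos (h.precedes_top_bot i)
  have hrefl : 0 < (relMatrix (Precedes path))ᵀ (src i) (src i) := relMatrix_pos (.inl rfl)
  have hnonneg : ∀ a b, 0 ≤ (relMatrix (Precedes path))ᵀ a b := fun a b => relMatrix_nonneg _ b a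
  rw [h.trekRows_unitPoint]
  split_ifs
  · exact mul_apply_pos (relMatrix_nonneg _) (relMatrix_nonneg _) hlink hprec
  · exact mul_apply_pos (mul_apply_nonneg hnonneg (relMatrix_nonneg _)) (relMatrix_nonneg _)
      (mul_apply_pos hnonneg (relMatrix_nonneg _) hrefl hlink) hprec

lemma exists_trek_of_trekRows_unitPoint_ne_zero (h : IsPathSystem E path top bot) {b : V}
    (hne : trekRows H src (unitPoint path src top) i b ≠ 0) :
    ∃ a c, Precedes path a (src i) ∧ Link src top a c ∧ Precedes path c b := by
  rw [h.trekRows_unitPoint] at hne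
  split_ifs at hne
  · obtain ⟨c, hlink, hprec⟩ := exists_apply_ne_zero_of_mul_apply_ne_zero hne
    exact ⟨src i, c, .inl rfl, of_relMatrix_ne_zero hlink, of_relMatrix_ne_zero hprec⟩
  · obtain ⟨c, hleft, hprec⟩ := exists_apply_ne_zero_of_mul_apply_ne_zero hne
    obtain ⟨a, hprec', hlink⟩ := exists_apply_ne_zero_of_mul_apply_ne_zero hleft
    exact ⟨a, c, of_relMatrix_ne_zero hprec', of_relMatrix_ne_zero hlink,
      of_relMatrix_ne_zero hprec⟩

lemma eq_or_lex_of_trekRows_unitPoint_ne_zero (h : IsPathSystem E path top bot)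
    (hsrc : Function.Injective src)
    (hdepth : ∀ i j, src i ∈ path j → (j = i ∧ top i = src i) ∨ depth i = depth j + 1)
    (hne : trekRows H src (unitPoint path src top) i (bot j) ≠ 0) :
    j = i ∨ Prod.Lex (· < ·) (· < ·) (depth j, pos path (src j)) (depth i, pos path (src i)) := by
  obtain ⟨a, c, hai, ⟨k, hk⟩, hcj⟩ := h.exists_trek_of_trekRows_unitPoint_ne_zero hne
  have hcj : c ∈ path j := (h.mem_of_precedes hcj).2 (h.bot_mem j)
  obtain ⟨rfl, rfl⟩ | ⟨rfl, rfl⟩ := Sym2.eq_iff.1 hk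
  · obtain rfl := h.eq_of_mem hcj (h.top_mem k)
    exact h.eq_or_lex_of_precedes hsrc hdepth hai
  · have hik : src i ∈ path k := (h.mem_of_precedes hai).1 (h.top_mem k)
    rw [Prod.lex_def]
    obtain ⟨rfl, -⟩ | hki := hdepth i k hik <;> obtain ⟨rfl, -⟩ | hjk := hdepth k j hcj
    · exact .inl rfl
    all_goals exact .inr (.inl (by dsimp only; omega))

theorem det_trekRows_unitPoint_ne_zero [Fintype ι] [DecidableEq ι] (h : IsPathSystem E path top bot)
    (hsrc : Function.Injective src)
    (hdepth : ∀ i j, src i ∈ path j → (j = i ∧ top i = src i) ∨ depth i = depth j + 1) :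
    ((trekRows H src (unitPoint path src top)).submatrix id bot).det ≠ 0 :=
  det_ne_zero_of_wellFounded
    (InvImage.wf (fun i => (depth i, pos path (src i))) (wellFounded_lt.prod_lex wellFounded_lt))
    (fun i => (h.trekRows_unitPoint_bot_pos H src i).ne')
    fun _ _ hne => h.eq_or_lex_of_trekRows_unitPoint_ne_zero hsrc hdepth hne

end IsPathSystem

end SpecialPoint

variable {V : Type*}

section Genericity

/-- Pairs `(Λ, Ω)` of arbitrary real matrices, not only those in `Θ`. -/
abbrev Params (V : Type*) := Matrix V V ℝ × Matrix V V ℝ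

/-- The functions of `(Λ, Ω)` given by a polynomial in the coordinates. -/
def polynomialFunctions (V : Type*) : Subalgebra ℝ (Params V → ℝ) where
  carrier := {F | ∃ P, ∀ θ, F θ = evalParam θ P}
  add_mem' := fun ⟨P, hP⟩ ⟨Q, hQ⟩ => ⟨P + Q, fun θ => by simp [hP, hQ, evalParam]⟩
  mul_mem' := fun ⟨P, hP⟩ ⟨Q, hQ⟩ => ⟨P * Q, fun θ => by simp [hP, hQ, evalParam]⟩
  algebraMap_mem' := fun c => ⟨MvPolynomial.C c, fun θ => by simp [evalParam]⟩

lemma fst_apply_mem_polynomialFunctions (v w : V) : (·.1 v w) ∈ polynomialFunctions V :=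
  ⟨MvPolynomial.X (Sum.inl (v, w)), fun θ => by simp [evalParam]⟩

lemma snd_apply_mem_polynomialFunctions (v w : V) : (·.2 v w) ∈ polynomialFunctions V :=
  ⟨MvPolynomial.X (Sum.inr (v, w)), fun θ => by simp [evalParam]⟩

lemma eventually_cofinite_evalParam_ne_zero {P : MvPolynomial ((V × V) ⊕ (V × V)) ℝ}
    {θ δ : Params V} {t₀ : ℝ} (h : evalParam (θ + t₀ • δ) P ≠ 0) :
    ∀ᶠ t : ℝ in Filter.cofinite, evalParam (θ + t • δ) P ≠ 0 := by
  let coords (θ : Params V) : (V × V) ⊕ (V × V) → ℝ :=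
    Sum.elim (fun e => θ.1 e.1 e.2) (fun e => θ.2 e.1 e.2)
  have hline (t : ℝ) :
      evalParam (θ + t • δ) P = MvPolynomial.eval (coords θ + t • coords δ) P := by
    rw [evalParam]
    congr 2
    ext (e | e) <;> rfl
  simp only [hline] at h ⊢
  exact eventually_cofinite_eval_add_smul_ne_zero P _ _ h

variable [Fintype V] [DecidableEq V] {G : MixedGraph V}

/-- The linear span of `Θ`: `Λ` is supported on `D`, and `Ω` is symmetric and supported on the
diagonal and `B`. -/
def paramSpace (G : MixedGraph V) : Submodule ℝ (Params V) where
  carrier := {θ | (∀ v w, (v, w) ∉ G.D → θ.1 v w = 0) ∧ θ.2.IsSymm ∧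
    ∀ v w, v ≠ w → (v, w) ∉ G.B → θ.2 v w = 0}
  zero_mem' := ⟨fun _ _ _ => rfl, Matrix.isSymm_zero, fun _ _ _ _ => rfl⟩
  add_mem' := fun ⟨hΛ, hsymm, hΩ⟩ ⟨hΛ', hsymm', hΩ'⟩ =>
    ⟨fun v w h => by simp [hΛ v w h, hΛ' v w h], hsymm.add hsymm',
      fun v w hvw h => by simp [hΩ v w hvw h, hΩ' v w hvw h]⟩
  smul_mem' := fun c _ ⟨hΛ, hsymm, hΩ⟩ =>
    ⟨fun v w h => by simp [hΛ v w h], hsymm.smul c, fun v w hvw h => by simp [hΩ v w hvw h]⟩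

lemma det_one_sub_fst_mem_polynomialFunctions :
    (fun θ => (1 - θ.1).det) ∈ polynomialFunctions V :=
  det_mem fun v w => one_sub_apply_mem (fst_apply_mem_polynomialFunctions v w)

lemma zero_one_mem_paramSpace : (0, 1) ∈ G.paramSpace :=
  ⟨fun _ _ _ => rfl, Matrix.isSymm_one, fun _ _ hvw _ => Matrix.one_apply_ne hvw⟩

lemma zero_one_mem_Theta : (0, 1) ∈ G.Theta :=
  ⟨⟨fun _ _ _ => rfl, by simp⟩, Matrix.PosDef.one, fun _ _ hvw _ => Matrix.one_apply_ne hvw⟩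

lemma exists_mem_paramSpace_evalParam_mul_ne_zero {P Q : MvPolynomial ((V × V) ⊕ (V × V)) ℝ}
    (hP : ∃ θ ∈ G.paramSpace, evalParam θ P ≠ 0) (hQ : ∃ θ ∈ G.paramSpace, evalParam θ Q ≠ 0) :
    ∃ θ ∈ G.paramSpace, evalParam θ (P * Q) ≠ 0 := by
  obtain ⟨θ, hθ, hPθ⟩ := hP
  obtain ⟨η, hη, hQη⟩ := hQ
  have hPline : evalParam (θ + (0 : ℝ) • (η - θ)) P ≠ 0 := by simpa using hPθ
  have hQline : evalParam (θ + (1 : ℝ) • (η - θ)) Q ≠ 0 := by simpa using hQη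
  obtain ⟨t, hPt, hQt⟩ := ((eventually_cofinite_evalParam_ne_zero hPline).and
    (eventually_cofinite_evalParam_ne_zero hQline)).exists
  refine ⟨θ + t • (η - θ), add_mem hθ (Submodule.smul_mem _ t (sub_mem hη hθ)), ?_⟩
  rw [evalParam, map_mul]
  exact mul_ne_zero hPt hQt

lemma exists_mem_Theta_evalParam_ne_zero {P : MvPolynomial ((V × V) ⊕ (V × V)) ℝ}
    (hP : ∃ θ ∈ G.paramSpace, evalParam θ P ≠ 0) : ∃ θ ∈ G.Theta, evalParam θ P ≠ 0 := by
  obtain ⟨Q, hQ⟩ := det_one_sub_fst_mem_polynomialFunctions (V := V)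
  obtain ⟨θ, hθ, hPQ⟩ := exists_mem_paramSpace_evalParam_mul_ne_zero hP
    ⟨0, G.paramSpace.zero_mem, by rw [← hQ]; simp⟩
  have hline : evalParam (θ + (0 : ℝ) • (0, 1)) (P * Q) ≠ 0 := by simpa using hPQ
  obtain ⟨t, ht, hpos⟩ :=
    (((eventually_cofinite_evalParam_ne_zero hline).filter_mono Filter.atTop_le_cofinite).and
      (eventually_posDef_add_smul_one (A := θ.2) (by simpa using hθ.2.1))).exists
  obtain ⟨hΛ, -, hΩ⟩ := add_mem hθ (Submodule.smul_mem _ t zero_one_mem_paramSpace)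
  rw [evalParam, map_mul, ← evalParam, ← evalParam, ← hQ] at ht
  exact ⟨_, ⟨⟨hΛ, (right_ne_zero_of_mul ht).isUnit⟩, hpos, hΩ⟩, left_ne_zero_of_mul ht⟩

lemma isProperAlgebraic_empty : G.IsProperAlgebraic ∅ :=
  ⟨1, ⟨_, zero_one_mem_Theta, by simp [evalParam]⟩, by simp [evalParam]⟩

lemma Theta_subset_paramSpace : G.Theta ⊆ G.paramSpace := fun _ ⟨hΛ, hpos, hΩ⟩ =>
  ⟨hΛ.1, by simpa using hpos.isHermitian, hΩ⟩

lemma IsProperAlgebraic.union {V₀ V₁ : Set (Params V)} (h₀ : G.IsProperAlgebraic V₀)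
    (h₁ : G.IsProperAlgebraic V₁) : G.IsProperAlgebraic (V₀ ∪ V₁) := by
  obtain ⟨P, ⟨θ, hθ, hP⟩, rfl⟩ := h₀
  obtain ⟨Q, ⟨η, hη, hQ⟩, rfl⟩ := h₁
  refine ⟨P * Q, exists_mem_Theta_evalParam_ne_zero
    (exists_mem_paramSpace_evalParam_mul_ne_zero ⟨θ, Theta_subset_paramSpace hθ, hP⟩
      ⟨η, Theta_subset_paramSpace hη, hQ⟩), ?_⟩
  ext θ
  simp [evalParam, and_or_left]

/-- The filter of sets containing `Θ` up to a proper algebraic subset. -/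
def generic (G : MixedGraph V) : Filter (Params V) where
  sets := {s | ∃ V₀, G.IsProperAlgebraic V₀ ∧ G.Theta \ V₀ ⊆ s}
  univ_sets := ⟨∅, isProperAlgebraic_empty, Set.subset_univ _⟩
  sets_of_superset := fun ⟨V₀, hV₀, hs⟩ hst => ⟨V₀, hV₀, hs.trans hst⟩
  inter_sets := fun ⟨V₀, hV₀, hs⟩ ⟨V₁, hV₁, ht⟩ => ⟨V₀ ∪ V₁, hV₀.union hV₁, fun _ ⟨hθ, hn⟩ =>
    ⟨hs ⟨hθ, fun h => hn (.inl h)⟩, ht ⟨hθ, fun h => hn (.inr h)⟩⟩⟩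

lemma eventually_mem_Theta : ∀ᶠ θ in G.generic, θ ∈ G.Theta :=
  ⟨∅, isProperAlgebraic_empty, Set.sdiff_subset⟩

lemma eventually_ne_zero_of_mem_polynomialFunctions {F : Params V → ℝ}
    (hF : F ∈ polynomialFunctions V) {θ₀ : Params V} (hθ₀ : θ₀ ∈ G.paramSpace)
    (h : F θ₀ ≠ 0) : ∀ᶠ θ in G.generic, F θ ≠ 0 := by
  obtain ⟨P, hP⟩ := hF
  refine ⟨_, ⟨P, exists_mem_Theta_evalParam_ne_zero ⟨θ₀, hθ₀, hP θ₀ ▸ h⟩, rfl⟩, ?_⟩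
  rintro θ ⟨hθ, hne⟩ hzero
  exact hne ⟨hθ, by rw [← hP, hzero]⟩

/-- The functions of `(Λ, Ω)` that are regular where `I-Λ` is invertible: polynomials divided by
a power of `det(I-Λ)`. -/
def regularFunctions (V : Type*) [Fintype V] [DecidableEq V] :
    Subalgebra ℝ (Params V → ℝ) where
  carrier := {F | ∃ k : ℕ, ∃ P ∈ polynomialFunctions V, ∀ θ, IsUnit (1 - θ.1).det →
    (1 - θ.1).det ^ k * F θ = P θ}
  add_mem' := by
    rintro F F' ⟨k, P, hP, hF⟩ ⟨l, Q, hQ, hF'⟩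
    refine ⟨k + l, _, add_mem (mul_mem (pow_mem det_one_sub_fst_mem_polynomialFunctions l) hP)
      (mul_mem (pow_mem det_one_sub_fst_mem_polynomialFunctions k) hQ), fun θ hθ => ?_⟩
    simp only [Pi.add_apply, Pi.mul_apply, Pi.pow_apply, ← hF θ hθ, ← hF' θ hθ]
    ring
  mul_mem' := by
    rintro F F' ⟨k, P, hP, hF⟩ ⟨l, Q, hQ, hF'⟩
    refine ⟨k + l, _, mul_mem hP hQ, fun θ hθ => ?_⟩
    simp only [Pi.mul_apply, ← hF θ hθ, ← hF' θ hθ]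
    ring
  algebraMap_mem' := fun c => ⟨0, _, (polynomialFunctions V).algebraMap_mem c, by simp⟩

lemma mem_regularFunctions_of_mem_polynomialFunctions {F : Params V → ℝ}
    (hF : F ∈ polynomialFunctions V) : F ∈ regularFunctions V :=
  ⟨0, F, hF, by simp⟩

lemma inv_one_sub_fst_apply_mem_regularFunctions (v w : V) :
    (fun θ => (1 - θ.1)⁻¹ v w) ∈ regularFunctions V := by
  refine ⟨1, fun θ => (1 - θ.1).adjugate v w, adjugate_apply_mem (fun v w => one_sub_apply_mem
    (fst_apply_mem_polynomialFunctions v w)) v w, fun θ hθ => ?_⟩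
  beta_reduce
  rw [Matrix.inv_def, Matrix.smul_apply, smul_eq_mul, pow_one, Ring.mul_inverse_cancel_left _ _ hθ]

lemma trekRows_apply_mem_regularFunctions {ι : Type*} (H : ι → Prop) (src : ι → V) (i : ι)
    (b : V) : (trekRows H src · i b) ∈ regularFunctions V := by
  have hΩ (v w : V) : (·.2 v w) ∈ regularFunctions V :=
    mem_regularFunctions_of_mem_polynomialFunctions (snd_apply_mem_polynomialFunctions v w)
  simp only [trekRows, phi, Matrix.of_apply]
  split_ifs
  · exact mul_apply_mem (hΩ _) (inv_one_sub_fst_apply_mem_regularFunctions · b)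
  · exact mul_apply_mem
      (fun _ => mul_apply_mem (inv_one_sub_fst_apply_mem_regularFunctions · _) (hΩ · _))
      (inv_one_sub_fst_apply_mem_regularFunctions · b)

lemma eventually_ne_zero_of_mem_regularFunctions {F : Params V → ℝ}
    (hF : F ∈ regularFunctions V) {θ₀ : Params V} (hθ₀ : θ₀ ∈ G.paramSpace)
    (hdet : IsUnit (1 - θ₀.1).det) (h : F θ₀ ≠ 0) : ∀ᶠ θ in G.generic, F θ ≠ 0 := by
  obtain ⟨k, P, hP, hFP⟩ := hF
  have hPθ₀ : P θ₀ ≠ 0 := hFP θ₀ hdet ▸ mul_ne_zero (pow_ne_zero k hdet.ne_zero) h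
  filter_upwards [eventually_ne_zero_of_mem_polynomialFunctions hP hθ₀ hPθ₀,
    eventually_mem_Theta] with θ hPθ hθ
  rw [← hFP θ hθ.1.2] at hPθ
  exact right_ne_zero_of_mul hPθ

end Genericity

section RationalFunctions

variable [Fintype V] [DecidableEq V] {G : MixedGraph V}

/-- The functions of `(Λ, Ω)` that agree generically with a rational function of the covariance
matrix `φ_G(Λ, Ω)`. -/
def rationalFunctions (G : MixedGraph V) : Subalgebra ℝ (Params V → ℝ) where
  carrier := {F | ∃ p q : MvPolynomial (V × V) ℝ, ∀ᶠ θ in G.generic,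
    evalAtCov (phi θ.1 θ.2) q ≠ 0 ∧
      F θ * evalAtCov (phi θ.1 θ.2) q = evalAtCov (phi θ.1 θ.2) p}
  add_mem' := by
    rintro F F' ⟨p, q, h⟩ ⟨p', q', h'⟩
    refine ⟨p * q' + p' * q, q * q', ?_⟩
    filter_upwards [h, h'] with θ ⟨hq, hF⟩ ⟨hq', hF'⟩
    simp only [evalAtCov, map_add, map_mul, Pi.add_apply] at *
    exact ⟨mul_ne_zero hq hq', by rw [← hF, ← hF']; ring⟩
  mul_mem' := by
    rintro F F' ⟨p, q, h⟩ ⟨p', q', h'⟩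
    refine ⟨p * p', q * q', ?_⟩
    filter_upwards [h, h'] with θ ⟨hq, hF⟩ ⟨hq', hF'⟩
    simp only [evalAtCov, map_mul, Pi.mul_apply] at *
    exact ⟨mul_ne_zero hq hq', by rw [← hF, ← hF']; ring⟩
  algebraMap_mem' := fun c => ⟨MvPolynomial.C c, 1, by simp [evalAtCov]⟩

lemma phi_apply_mem_rationalFunctions (v w : V) :
    (fun θ => phi θ.1 θ.2 v w) ∈ G.rationalFunctions :=
  ⟨MvPolynomial.X (v, w), 1, by simp [evalAtCov]⟩

lemma mem_rationalFunctions_congr {F F' : Params V → ℝ} (hF : F ∈ G.rationalFunctions)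
    (h : F' =ᶠ[G.generic] F) : F' ∈ G.rationalFunctions := by
  obtain ⟨p, q, hpq⟩ := hF
  refine ⟨p, q, ?_⟩
  filter_upwards [hpq, h] with θ hθ hFF'
  rwa [hFF']

lemma inv_mem_rationalFunctions {F : Params V → ℝ} (hF : F ∈ G.rationalFunctions)
    (hne : ∀ᶠ θ in G.generic, F θ ≠ 0) : F⁻¹ ∈ G.rationalFunctions := by
  obtain ⟨p, q, hpq⟩ := hF
  refine ⟨q, p, ?_⟩
  filter_upwards [hpq, hne] with θ ⟨hq, hFq⟩ hFne
  rw [← hFq, Pi.inv_apply, inv_mul_cancel_left₀ hFne]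
  exact ⟨mul_ne_zero hFne hq, rfl⟩

lemma apply_mem_rationalFunctions_of_mulVec_eq {ι : Type*} [Fintype ι] [DecidableEq ι]
    {A : Params V → Matrix ι ι ℝ} {x b : Params V → ι → ℝ}
    (hA : ∀ i j, (A · i j) ∈ G.rationalFunctions) (hb : ∀ i, (b · i) ∈ G.rationalFunctions)
    (hdet : ∀ᶠ θ in G.generic, (A θ).det ≠ 0) (hAx : ∀ᶠ θ in G.generic, A θ *ᵥ x θ = b θ)
    (i : ι) : (x · i) ∈ G.rationalFunctions := by
  have hsum : (fun θ => ((A θ).adjugate *ᵥ b θ) i) ∈ G.rationalFunctions := by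
    convert sum_mem (t := Finset.univ) fun k _ => mul_mem (adjugate_apply_mem hA i k) (hb k)
    simp [Matrix.mulVec, dotProduct]
  refine mem_rationalFunctions_congr
    (mul_mem (inv_mem_rationalFunctions (det_mem hA) hdet) hsum) ?_
  filter_upwards [hdet, hAx] with θ hθ hx
  rw [Pi.mul_apply, Pi.inv_apply, ← hx, Matrix.mulVec_mulVec, Matrix.adjugate_mul,
    Matrix.smul_mulVec, Matrix.one_mulVec, Pi.smul_apply, smul_eq_mul,
    inv_mul_cancel_left₀ hθ]

lemma rationallyIdentifiable_of_mem_rationalFunctions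
    (hΛ : ∀ v w, (·.1 v w) ∈ G.rationalFunctions) (hΩ : ∀ v w, (·.2 v w) ∈ G.rationalFunctions) :
    G.RationallyIdentifiable := by
  choose pΛ qΛ hΛ using hΛ
  choose pΩ qΩ hΩ using hΩ
  obtain ⟨V₀, hV₀, hsub⟩ : ∀ᶠ θ in G.generic, ∀ v w, _ ∧ _ :=
    Filter.eventually_all.2 fun v => Filter.eventually_all.2 fun w => (hΛ v w).and (hΩ v w)
  refine ⟨V₀, hV₀, Sum.elim (fun e => pΛ e.1 e.2) (fun e => pΩ e.1 e.2),
    Sum.elim (fun e => qΛ e.1 e.2) (fun e => qΩ e.1 e.2), fun θ hθ => ⟨?_, ?_, ?_⟩⟩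
  · rintro (e | e)
    exacts [(hsub hθ e.1 e.2).1.1, (hsub hθ e.1 e.2).2.1]
  · exact fun v w => (hsub hθ v w).1.2
  · exact fun v w => (hsub hθ v w).2.2

end RationalFunctions

section TrekRows

variable {R ι : Type*} [CommRing R] [Fintype V] [DecidableEq V]

lemma phi_mul_one_sub {Λ : Matrix V V R} (h : IsUnit (1 - Λ).det) (Ω : Matrix V V R) :
    phi Λ Ω * (1 - Λ) = ((1 - Λ)⁻¹)ᵀ * Ω := by
  rw [phi, Matrix.mul_assoc, Matrix.nonsing_inv_mul _ h, Matrix.mul_one]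

lemma transpose_one_sub_mul_phi {Λ : Matrix V V R} (h : IsUnit (1 - Λ).det) (Ω : Matrix V V R) :
    (1 - Λ)ᵀ * phi Λ Ω = Ω * (1 - Λ)⁻¹ := by
  rw [phi, Matrix.mul_assoc, ← Matrix.mul_assoc, ← Matrix.transpose_mul,
    Matrix.nonsing_inv_mul _ h, Matrix.transpose_one, Matrix.one_mul]

variable {G : MixedGraph V} {v y : V}

lemma eq_or_mem_B_of_apply_ne_zero {Ω : Matrix V V ℝ} (hΩ : Ω ∈ G.PDB) (h : Ω v y ≠ 0) :
    v = y ∨ (v, y) ∈ G.B := by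
  by_contra! hne
  exact h (hΩ.2 v y hne.1 hne.2)

lemma mem_htr_of_reflTransGen {a : V} (hyv : y ≠ v) (hy : y ∉ G.sib v)
    (hva : v = a ∨ (v, a) ∈ G.B) (hay : Relation.ReflTransGen (fun b c => (b, c) ∈ G.D) a y) :
    y ∈ G.htr v := by
  obtain ⟨l, hchain, hlast⟩ := List.exists_isChain_cons_of_relationReflTransGen hay
  have hl : l ≠ [] := by
    rintro rfl
    obtain rfl : a = y := hlast
    exact hva.elim (fun h => hyv h.symm) fun h => hy (by simpa [sib] using G.B_symm _ _ h)
  let π (hasBidir : Bool) (h : if hasBidir then (v, a) ∈ G.B else v = a) : G.Trek :=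
    { left := [v], right := a :: l, left_ne := by simp, right_ne := by simp, hasBidir,
      left_chain := List.isChain_singleton v, right_chain := hchain, head_cond := h }
  obtain ⟨hasBidir, h⟩ : ∃ hasBidir : Bool, if hasBidir then (v, a) ∈ G.B else v = a :=
    hva.elim (⟨false, by simpa using ·⟩) (⟨true, by simpa using ·⟩)
  exact ⟨hyv, hy, π hasBidir h, rfl, hlast, by simp [Trek.IsHalfTrek, Trek.leftSet, π],
    by simpa [Trek.nEdges, π] using Nat.one_le_iff_ne_zero.2 (mt List.length_eq_zero_iff.1 hl)⟩

lemma mul_inv_one_sub_apply_eq_zero {θ : Params V} (hθ : θ ∈ G.Theta) (hyv : y ≠ v)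
    (hy : y ∉ G.sib v) (hy_htr : y ∉ G.htr v) : (θ.2 * (1 - θ.1)⁻¹) v y = 0 := by
  by_contra hne
  obtain ⟨a, hva, hay⟩ := exists_apply_ne_zero_of_mul_apply_ne_zero hne
  refine hy_htr (mem_htr_of_reflTransGen hyv hy (eq_or_mem_B_of_apply_ne_zero hθ.2 hva) ?_)
  refine Relation.ReflTransGen.mono (fun b c hbc => ?_) a y
    (reflTransGen_of_inv_one_sub_apply_ne_zero hθ.1.2 hay)
  by_contra hD
  exact hbc (hθ.1.1 b c hD)

lemma trekRows_mul_one_sub_apply {θ : Params V} (h : IsUnit (1 - θ.1).det) (H : ι → Prop)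
    (src : ι → V) (i : ι) (b : V) : (trekRows H src θ * (1 - θ.1) : Matrix ι V ℝ) i b =
      if H i then θ.2 (src i) b else (((1 - θ.1)⁻¹)ᵀ * θ.2 : Matrix V V ℝ) (src i) b := by
  rw [Matrix.mul_apply]
  simp only [trekRows, Matrix.of_apply]
  split_ifs
  · rw [← Matrix.mul_apply, Matrix.mul_assoc, Matrix.nonsing_inv_mul _ h, Matrix.mul_one]
  · rw [← Matrix.mul_apply, phi_mul_one_sub h]

lemma trekRows_mul_one_sub_apply_eq_zero {θ : Params V} (hθ : θ ∈ G.Theta) {H : ι → Prop}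
    {src : ι → V} {i : ι} (hiv : src i ≠ v) (hi : src i ∉ G.sib v)
    (hH : src i ∈ G.htr v → H i) : (trekRows H src θ * (1 - θ.1) : Matrix ι V ℝ) i v = 0 := by
  rw [trekRows_mul_one_sub_apply hθ.1.2]
  split_ifs with hHi
  · exact hθ.2.2 _ _ hiv (by simpa [sib] using hi)
  · have hsymm : θ.2ᵀ = θ.2 := (Theta_subset_paramSpace hθ).2.1
    rw [← hsymm, ← Matrix.transpose_mul, Matrix.transpose_apply]
    exact mul_inv_one_sub_apply_eq_zero hθ hiv hi (mt hH hHi)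

lemma submatrix_mulVec_eq_of_mul_one_sub_apply_eq_zero {κ : Type*} [Fintype κ] {Λ : Matrix V V ℝ}
    (hΛ : ∀ a b, (a, b) ∉ G.D → Λ a b = 0) {M : Matrix ι V ℝ} {bot : κ → V}
    (hbot : Function.Injective bot) (hpa : Set.range bot = G.pa v)
    (hM : ∀ i, (M * (1 - Λ) : Matrix ι V ℝ) i v = 0) :
    M.submatrix id bot *ᵥ (fun j => Λ (bot j) v) = fun i => M i v := by
  ext i
  have hsum : ∑ j, M i (bot j) * Λ (bot j) v = (M * Λ) i v := by
    refine Fintype.sum_of_injective bot hbot _ _ (fun w hw => ?_) fun _ => rfl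
    beta_reduce
    rw [hΛ w v fun hD => hw (hpa ▸ by simpa [pa] using hD), mul_zero]
  have hi := hM i
  rw [Matrix.mul_sub, Matrix.mul_one, Matrix.sub_apply, sub_eq_zero] at hi
  exact hsum.trans hi.symm

end TrekRows

section HalfTrekCriterion

variable [Fintype V] [DecidableEq V] {G : MixedGraph V} {v : V}

lemma Trek.IsHalfTrek.head_right_eq_source_or_mem_B {π : G.Trek} (h : π.IsHalfTrek) :
    π.right.head π.right_ne = π.source ∨ (π.source, π.right.head π.right_ne) ∈ G.B := by
  obtain ⟨a, ha⟩ := Finset.card_eq_one.1 h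
  have eq_of_mem {b : V} (hb : b ∈ π.left) : b = a := by
    rw [← Finset.mem_singleton, ← ha]
    exact List.mem_toFinset.2 hb
  have hhead : π.left.head π.left_ne = π.source :=
    (eq_of_mem (List.head_mem _)).trans (eq_of_mem (List.getLast_mem _)).symm
  have hcond := π.head_cond
  split_ifs at hcond
  exacts [.inr (hhead ▸ hcond), .inl (hcond.symm.trans hhead)]

lemma SatisfiesHTC.exists_isPathSystem {Y : Finset V} (h : G.SatisfiesHTC v Y) :
    ∃ (path : Y → List V) (top bot : Y → V),
      IsPathSystem (fun a b => (a, b) ∈ G.D) path top bot ∧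
      (∀ i, top i = i ∨ (↑i, top i) ∈ G.B) ∧ Set.range bot = G.pa v := by
  obtain ⟨-, -, π, hhalf, ⟨hsource, htarget, -⟩, hdisj⟩ := h
  have hpath (i : Y) : ∃ l : List V, l.IsChain (fun a b => (a, b) ∈ G.D) ∧ l.Nodup ∧
      l ⊆ (π i).right ∧ l.head? = (π i).right.head? ∧ l.getLast? = (π i).right.getLast? :=
    exists_nodup_isChain (π i).right_chain
  choose path hchain hnodup hsub hhead hlast using hpath
  refine ⟨path, fun i => (π i).right.head (π i).right_ne, fun i => (π i).target,
    { isChain := hchain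
      nodup := hnodup
      eq_of_mem := fun {i j u} hi hj => ?_
      head?_eq := fun i => (hhead i).trans (List.head?_eq_some_head _)
      getLast?_eq := fun i => (hlast i).trans (List.getLast?_eq_some_getLast _) },
    fun i => ?_, ?_⟩
  · by_contra hij
    have hright := (hdisj i i.2 j j.2 fun hij' => hij (Subtype.ext hij')).2
    exact Finset.disjoint_left.1 hright (List.mem_toFinset.2 (hsub i hi))
      (List.mem_toFinset.2 (hsub j hj))
  · simpa only [hsource i i.2] using (hhalf i i.2).head_right_eq_source_or_mem_B
  · rw [← htarget, Finset.coe_image, Set.image_eq_range]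
    rfl

lemma unitPoint_mem_paramSpace {ι : Type*} {path : ι → List V} {src top bot : ι → V}
    (h : IsPathSystem (fun a b => (a, b) ∈ G.D) path top bot)
    (htop : ∀ i, top i = src i ∨ (src i, top i) ∈ G.B) :
    unitPoint path src top ∈ G.paramSpace := by
  refine ⟨fun a b hab => ?_, ?_, fun a b hne hab => ?_⟩
  · by_contra hstep
    exact hab (h.rel_of_step (of_relMatrix_ne_zero hstep))
  · have hlink (a b : V) : Link src top a b ↔ Link src top b a := by
      rw [Link, Link, Sym2.eq_swap]
    ext a b
    exact if_congr (hlink b a) rfl rfl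
  · by_contra hlink
    obtain ⟨i, hi⟩ := of_relMatrix_ne_zero hlink
    obtain ⟨rfl, rfl⟩ | ⟨rfl, rfl⟩ := Sym2.eq_iff.1 hi
    · exact hab ((htop i).resolve_left hne.symm)
    · exact hab (G.B_symm _ _ ((htop i).resolve_left hne))

theorem SatisfiesHTC.exists_eventually_det_trekRows_ne_zero {Y : Finset V}
    (h : G.SatisfiesHTC v Y) : ∃ bot : Y → V, Function.Injective bot ∧ Set.range bot = G.pa v ∧
      ∀ H, ∀ᶠ θ in G.generic, ((trekRows H Subtype.val θ).submatrix id bot).det ≠ 0 := by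
  obtain ⟨path, top, bot, hsys, htop, hpa⟩ := h.exists_isPathSystem
  obtain ⟨path', top', bot', depth, hsys', htop', hbot', hdepth⟩ :=
    hsys.exists_rerouting Subtype.val
  have hunit : unitPoint path' Subtype.val top' ∈ G.paramSpace :=
    unitPoint_mem_paramSpace hsys' fun i =>
      (htop' i).elim .inl fun htop_eq => htop_eq ▸ htop i
  have hinv : IsUnit (1 - (unitPoint path' Subtype.val top').1).det :=
    Matrix.isUnit_det_of_right_inverse hsys'.one_sub_relMatrix_step_mul
  refine ⟨bot', fun i j hij => hsys'.eq_of_mem (hsys'.bot_mem i) (hij ▸ hsys'.bot_mem j),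
    hbot'.trans hpa, fun H => eventually_ne_zero_of_mem_regularFunctions
      (det_mem fun i j => trekRows_apply_mem_regularFunctions H _ i (bot' j)) hunit hinv
      (hsys'.det_trekRows_unitPoint_ne_zero Subtype.val_injective hdepth)⟩

lemma trekRows_apply_mem_rationalFunctions {ι : Type*} {H : ι → Prop} {src : ι → V} {i : ι}
    (hΛ : H i → ∀ w, (·.1 w (src i)) ∈ G.rationalFunctions) (b : V) :
    (trekRows H src · i b) ∈ G.rationalFunctions := by
  by_cases hi : H i
  · have hmem : (fun θ => ((1 - θ.1)ᵀ * phi θ.1 θ.2 : Matrix V V ℝ) (src i) b) ∈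
        G.rationalFunctions :=
      mul_apply_mem (fun k => one_sub_apply_mem (hΛ hi k)) (phi_apply_mem_rationalFunctions · b)
    refine mem_rationalFunctions_congr hmem ?_
    filter_upwards [eventually_mem_Theta] with θ hθ
    rw [transpose_one_sub_mul_phi hθ.1.2, trekRows, Matrix.of_apply, if_pos hi]
  · simpa only [trekRows, Matrix.of_apply, if_neg hi] using phi_apply_mem_rationalFunctions _ b

theorem SatisfiesHTC.fst_apply_mem_rationalFunctions {Y : Finset V} (h : G.SatisfiesHTC v Y)
    (hY : ∀ y ∈ Y, y ∈ G.htr v → ∀ w, (·.1 w y) ∈ G.rationalFunctions) (w : V) :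
    (·.1 w v) ∈ G.rationalFunctions := by
  obtain ⟨bot, hbot, hpa, hdet⟩ := h.exists_eventually_det_trekRows_ne_zero
  let H (i : Y) : Prop := (i : V) ∈ G.htr v
  have hmem (i : Y) (b : V) : (trekRows H Subtype.val · i b) ∈ G.rationalFunctions :=
    trekRows_apply_mem_rationalFunctions (hY i i.2) b
  have hsolve : ∀ᶠ θ in G.generic, (trekRows H Subtype.val θ).submatrix id bot *ᵥ
      (fun j => θ.1 (bot j) v) = fun i => trekRows H Subtype.val θ i v := by
    filter_upwards [eventually_mem_Theta] with θ hθ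
    exact submatrix_mulVec_eq_of_mul_one_sub_apply_eq_zero hθ.1.1 hbot hpa fun i =>
      trekRows_mul_one_sub_apply_eq_zero hθ (h.2.1 i i.2).1 (h.2.1 i i.2).2 id
  by_cases hw : w ∈ G.pa v
  · obtain ⟨j, rfl⟩ : w ∈ Set.range bot := hpa ▸ hw
    exact apply_mem_rationalFunctions_of_mulVec_eq (fun i k => hmem i (bot k)) (hmem · v)
      (hdet H) hsolve j
  · refine mem_rationalFunctions_congr (zero_mem _) ?_
    filter_upwards [eventually_mem_Theta] with θ hθ
    exact hθ.1.1 w v (by simpa [pa] using hw)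

lemma snd_apply_mem_rationalFunctions (hΛ : ∀ a b, (·.1 a b) ∈ G.rationalFunctions) (v w : V) :
    (·.2 v w) ∈ G.rationalFunctions := by
  have hmem : (fun θ => ((1 - θ.1)ᵀ * phi θ.1 θ.2 * (1 - θ.1) : Matrix V V ℝ) v w) ∈
      G.rationalFunctions :=
    mul_apply_mem (fun l => mul_apply_mem (fun k => one_sub_apply_mem (hΛ k v))
      (phi_apply_mem_rationalFunctions · l)) fun l => one_sub_apply_mem (hΛ l w)
  refine mem_rationalFunctions_congr hmem ?_
  filter_upwards [eventually_mem_Theta] with θ hθ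
  rw [transpose_one_sub_mul_phi hθ.1.2, Matrix.mul_assoc, Matrix.nonsing_inv_mul _ hθ.1.2,
    Matrix.mul_one]

end HalfTrekCriterion

end MixedGraph

/-- **HTC-identifiability** (Theorem 1): if every `Y v` satisfies the half-trek criterion
with respect to `v` and there is a total ordering `r` on the vertex set such that `r w v`
whenever `w ∈ Y v ∩ htr(v)`, then `G` is rationally identifiable. -/
theorem htc_identifiability {V : Type*} [Fintype V] [DecidableEq V] (G : MixedGraph V)
    (Y : V → Finset V) (hY : ∀ v, G.SatisfiesHTC v (Y v))
    (r : V → V → Prop) (hr : IsStrictTotalOrder V r)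
    (hord : ∀ v w, w ∈ Y v → w ∈ G.htr v → r w v) :
    G.RationallyIdentifiable := by
  have hΛ (v : V) : ∀ w, (·.1 w v) ∈ G.rationalFunctions :=
    (Finite.wellFounded_of_trans_of_irrefl r).induction v fun v ih =>
      (hY v).fst_apply_mem_rationalFunctions fun y hy hyv => ih y (hord v y hy hyv)
  exact MixedGraph.rationallyIdentifiable_of_mem_rationalFunctions (fun v w => hΛ w v)
    (MixedGraph.snd_apply_mem_rationalFunctions fun a b => hΛ b a)
end

section
/- Let G=(V,D,B) be a mixed graph in which every family (Y_v : v∈V) of subsets of V either contains a set Y_v that fails to satisfy the half-trek criterion with respect to v or contains a pair of sets (Y_v,Y_w) with v∈Y_w and w∈Y_v. Then the parametrization φ_G is generically infinite-to-one. -/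
open scoped Classical Matrix

/-!
Parametrize pairs `(Λ, Ω)` linearly by their free coordinates and work first over the polynomial
ring in these coordinates. A direction `(Λ', Ω')` is tangent to the fiber of `φ` exactly when
`det (I - Λ) Ω' = -(T + Tᵀ)` for `T = Ω adj(I - Λ) Λ'`, so such directions are given by the `Λ'`
for which `T + Tᵀ` vanishes at the pairs `v ≠ w` that are not joined by a bidirected edge. A nonzero
polynomial solution is a polynomial vector field, along whose flow `φ` is constant. Hence every
fiber through a point at which the field does not vanish is infinite.

If there were no nonzero solution, some maximal minor of the linear system would be nonzero. Its
rows are sums of the contributions of `(v, w)` and `(w, v)`; by multilinearity one of the two can be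
selected in each row such that the determinant stays nonzero. It is then block diagonal with respect
to the heads of the directed edges, with blocks the minors of `Ω adj(I - Λ)` with rows `Y_v` and
columns `pa(v)`. Bordering `I - Λ` by rows of `Ω`, a permutation contributing to such a
determinant has excursions from `Y_v` to `pa(v)` that are half-treks without sided intersection. As
only one of `(v, w)` and `(w, v)` is selected, `v ∈ Y_w` and `w ∈ Y_v` never hold together.
-/

section LinearAlgebra

variable {m n R : Type*} [Fintype n] [DecidableEq n] [CommRing R]

theorem exists_perm_forall_ne_zero_of_det_ne_zero {M : Matrix n n R} (hM : M.det ≠ 0) :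
    ∃ σ : Equiv.Perm n, ∀ i, M (σ i) i ≠ 0 := by
  contrapose! hM
  refine (M.det_apply).trans (Finset.sum_eq_zero fun σ _ => ?_)
  obtain ⟨i, hi⟩ := hM σ
  have hprod : ∏ j, M (σ j) j = 0 := Finset.prod_eq_zero (Finset.mem_univ i) hi
  rw [hprod, smul_zero]

theorem exists_isUnit_submatrix_of_linearIndependent_col {K : Type*} [Field K] [Finite m]
    {A : Matrix m n K} (hA : LinearIndependent K A.col) :
    ∃ ι : n → m, IsUnit (A.submatrix ι id) := by
  have := Fintype.ofFinite m
  have hrank : Module.finrank K (Submodule.span K (Set.range A.row)) = Fintype.card n := by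
    have hT : Aᵀ.rank = Fintype.card n := LinearIndependent.rank_matrix hA
    rw [← Matrix.rank_eq_finrank_span_row, ← Matrix.rank_transpose, hT]
  obtain ⟨f, hf, -, hfind⟩ := Submodule.exists_fun_fin_finrank_span_eq K (Set.range A.row)
  choose g hg using hf
  let e := Fintype.equivFinOfCardEq hrank.symm
  refine ⟨g ∘ e, Matrix.linearIndependent_rows_iff_isUnit.mp ?_⟩
  have hrow : (A.submatrix (g ∘ e) id).row = f ∘ e := funext fun i => hg _
  exact hrow ▸ hfind.comp _ e.injective

theorem exists_submatrix_det_ne_zero [Finite m] [IsDomain R] {J : Matrix m n R}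
    (hJ : Function.Injective J.mulVec) : ∃ ι : n → m, (J.submatrix ι id).det ≠ 0 := by
  have hcol : LinearIndependent (FractionRing R)
      (J.map (algebraMap R (FractionRing R))).col :=
    (linearIndependent_algebraMap_comp_iff (v := J.col)).mpr (Matrix.mulVec_injective_iff.mp hJ)
  obtain ⟨ι, hι⟩ := exists_isUnit_submatrix_of_linearIndependent_col hcol
  refine ⟨ι, fun h0 => ((Matrix.isUnit_iff_isUnit_det _).mp hι).ne_zero ?_⟩
  rw [Matrix.submatrix_map, ← RingHom.mapMatrix_apply, ← RingHom.map_det, h0, map_zero]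

theorem exists_det_submatrix_ne_zero_of_add {Z W : Matrix m n R} {ι : n → m}
    (h : ((Z + W).submatrix ι id).det ≠ 0) :
    ∃ s : Finset n, Matrix.det (s.piecewise (Z.submatrix ι id) (W.submatrix ι id)) ≠ 0 := by
  contrapose! h
  rw [Matrix.submatrix_add]
  exact (Matrix.detRowAlternating.map_add_univ _ _).trans (Finset.sum_eq_zero fun s _ => h s)

theorem exists_selection_det_ne_zero {Z : Matrix m n R} {sw : m → m}
    (hsw : Function.Involutive sw) {ι : n → m}
    (h : ((Z + Z.submatrix sw id).submatrix ι id).det ≠ 0) :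
    ∃ κ : n → m, (∀ i j, κ i = κ j ∨ κ i = sw (κ j) → i = j) ∧ (∀ i, Z (κ i) i ≠ 0) ∧
      (Z.submatrix κ id).det ≠ 0 := by
  have hrows : ∀ i j, ι i = ι j ∨ ι i = sw (ι j) → i = j := by
    intro i j hij
    by_contra hne
    refine h (Matrix.det_zero_of_row_eq hne (funext fun c => ?_))
    rcases hij with hij | hij <;> simp [hij, hsw (ι j), add_comm]
  obtain ⟨s, hs⟩ : ∃ s : Finset n,
      (Z.submatrix (fun i => if i ∈ s then ι i else sw (ι i)) id).det ≠ 0 := by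
    obtain ⟨s, hs⟩ := exists_det_submatrix_ne_zero_of_add h
    refine ⟨s, fun h0 => hs (h0 ▸ congrArg _ (Matrix.ext fun i c => ?_))⟩
    by_cases his : i ∈ s <;> simp [his, Finset.piecewise]
  set ρ : n → m := fun i => if i ∈ s then ι i else sw (ι i) with hρ
  obtain ⟨σ, hσ⟩ := exists_perm_forall_ne_zero_of_det_ne_zero hs
  have hρι : ∀ i, ρ i = ι i ∨ ρ i = sw (ι i) := fun i => by
    by_cases his : i ∈ s <;> simp [hρ, his]
  refine ⟨ρ ∘ σ, fun i j hij => σ.injective (hrows _ _ ?_), hσ, ?_⟩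
  · rcases hρι (σ i) with hi | hi <;> rcases hρι (σ j) with hj | hj <;>
      simp only [Function.comp_apply, hi, hj, hsw (ι _), hsw.injective.eq_iff,
        hsw.eq_iff] at hij <;> tauto
  · have : Z.submatrix (ρ ∘ σ) id = (Z.submatrix ρ id).submatrix σ id := rfl
    rw [this, Matrix.det_permute]
    rcases Int.units_eq_one_or (Equiv.Perm.sign σ) with hsign | hsign <;> simpa [hsign] using hs

theorem det_fromBlocks_zero_ne_zero [Fintype m] [DecidableEq m] [IsDomain R] {A : Matrix m m R}
    {B : Matrix m n R} {C : Matrix n m R} (hA : A.det ≠ 0) (h : (C * A.adjugate * B).det ≠ 0) :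
    (Matrix.fromBlocks A B C 0).det ≠ 0 := by
  have hmul : Matrix.fromBlocks A B C 0 *
      Matrix.fromBlocks A.adjugate (-(A.adjugate * B)) 0 (A.det • 1) =
      Matrix.fromBlocks (A.det • 1) 0 (C * A.adjugate) (-(C * A.adjugate * B)) := by
    simp [Matrix.fromBlocks_multiply, ← Matrix.mul_assoc, Matrix.mul_adjugate]
  intro h0
  have hdet := congrArg Matrix.det hmul
  rw [Matrix.det_mul, h0, zero_mul, Matrix.det_fromBlocks_zero₁₂, Matrix.det_smul,
    Matrix.det_neg, Matrix.det_one] at hdet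
  simp [hA, h] at hdet

theorem exists_perm_forall_fromBlocks_ne_zero [Fintype m] [DecidableEq m] [IsDomain R]
    {A O : Matrix m m R} (hA : A.det ≠ 0) {y q : n → m}
    (h : ((O * A.adjugate).submatrix y q).det ≠ 0) :
    ∃ σ : Equiv.Perm (m ⊕ n), ∀ x, Matrix.fromBlocks A ((1 : Matrix m m R).submatrix id q)
      (O.submatrix y id) 0 x (σ x) ≠ 0 := by
  have hmul : O.submatrix y id * A.adjugate * (1 : Matrix m m R).submatrix id q =
      (O * A.adjugate).submatrix y q :=
    Matrix.mul_submatrix_one (Equiv.refl m) q _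
  obtain ⟨σ, hσ⟩ := exists_perm_forall_ne_zero_of_det_ne_zero
    (det_fromBlocks_zero_ne_zero hA (hmul ▸ h))
  exact ⟨σ.symm, fun x => by simpa using hσ (σ.symm x)⟩

theorem posDef_of_diagonally_dominant {A : Matrix n n ℝ} (hA : A.IsHermitian)
    (hdom : ∀ k, ∑ j ∈ Finset.univ.erase k, ‖A k j‖ < A k k) : A.PosDef := by
  refine hA.posDef_iff_eigenvalues_pos.mpr fun i => ?_
  have hev : Module.End.HasEigenvalue (Matrix.toLin' A) (hA.eigenvalues i) := by
    rw [Module.End.hasEigenvalue_iff_mem_spectrum, Matrix.spectrum_toLin']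
    exact hA.eigenvalues_mem_spectrum_real i
  obtain ⟨k, hk⟩ := eigenvalue_mem_ball hev
  rw [Metric.mem_closedBall, Real.dist_eq, abs_le] at hk
  linarith [hdom k, hk.1]

end LinearAlgebra

section Excursions

variable {α β : Type*} [Finite α] [Finite β]

theorem exists_pow_add_two_apply_eq_self (σ : Equiv.Perm α) (x : α) :
    ∃ k, (σ ^ (k + 2)) x = x := by
  obtain ⟨N, hN, hσN⟩ := isOfFinOrder_iff_pow_eq_one.mp (isOfFinOrder_of_finite σ)
  exact ⟨2 * N - 2, by rw [show 2 * N - 2 + 2 = N * 2 by lia, pow_mul, hσN, one_pow]; rfl⟩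

theorem exists_first_return (σ : Equiv.Perm (α ⊕ β)) (hσ : ∀ b, (σ (.inr b)).isLeft) :
    ∃ (len : β → ℕ) (walk : β → ℕ → α) (ret : β → β),
      (∀ b, ∀ k ≤ len b, (σ ^ (k + 1)) (.inr b) = .inl (walk b k)) ∧
      ∀ b, (σ ^ (len b + 2)) (.inr b) = .inr (ret b) := by
  choose start hstart using fun b => Sum.isLeft_iff.mp (hσ b)
  have hex : ∀ b, ∃ k, ((σ ^ (k + 2)) (.inr b)).isRight := fun b =>
    (exists_pow_add_two_apply_eq_self σ (.inr b)).imp fun k hk => by rw [hk, Sum.isRight_inr]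
  choose ret hret using fun b => Sum.isRight_iff.mp (Nat.find_spec (hex b))
  refine ⟨fun b => Nat.find (hex b),
    fun b k => ((σ ^ (k + 1)) (.inr b)).elim id fun _ => start b, ret, ?_, hret⟩
  rintro b (_ | k) hk
  · simp [hstart]
  · have hleft := Sum.not_isRight.mp (Nat.find_min (hex b) hk)
    obtain ⟨a, ha⟩ := Sum.isLeft_iff.mp hleft
    simp [ha]

theorem exists_excursions (σ : Equiv.Perm (α ⊕ β)) (hσ : ∀ b, (σ (.inr b)).isLeft) :
    ∃ (len : β → ℕ) (walk : β → ℕ → α) (ret : β → β), Function.Injective ret ∧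
      (∀ b, σ (.inr b) = .inl (walk b 0)) ∧
      (∀ b, ∀ k < len b, σ (.inl (walk b k)) = .inl (walk b (k + 1))) ∧
      (∀ b, σ (.inl (walk b (len b))) = .inr (ret b)) ∧
      ∀ b b' k k', k ≤ len b → k' ≤ len b' → walk b k = walk b' k' → b = b' ∧ k = k' := by
  obtain ⟨len, walk, ret, hwalk, hret⟩ := exists_first_return σ hσ
  have hend : ∀ b, σ (.inl (walk b (len b))) = .inr (ret b) := fun b => by
    rw [← hwalk b _ le_rfl, ← Equiv.Perm.mul_apply, ← pow_succ', hret]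
  have hdisj : ∀ b b' k k', k ≤ k' → k' ≤ len b' →
      (σ ^ (k + 1)) (.inr b) = (σ ^ (k' + 1)) (.inr b') → b = b' ∧ k = k' := by
    intro b b' k k' hkk' hk' heq
    obtain ⟨d, rfl⟩ := Nat.exists_eq_add_of_le hkk'
    rw [show k + d + 1 = k + 1 + d by ring, pow_add _ (k + 1), Equiv.Perm.mul_apply,
      (σ ^ (k + 1)).injective.eq_iff] at heq
    rcases d with _ | d
    · exact ⟨Sum.inr_injective heq, rfl⟩
    · exact absurd (heq.trans (hwalk b' d (by lia))) Sum.inr_ne_inl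
  have hinj : ∀ b b' k k', k ≤ len b → k' ≤ len b' → walk b k = walk b' k' →
      b = b' ∧ k = k' := by
    intro b b' k k' hk hk' heq
    have heq' := (hwalk b k hk).trans ((congrArg Sum.inl heq).trans (hwalk b' k' hk').symm)
    rcases le_total k k' with hkk' | hkk'
    · exact hdisj _ _ _ _ hkk' hk' heq'
    · exact (hdisj _ _ _ _ hkk' hk heq'.symm).imp Eq.symm Eq.symm
  refine ⟨len, walk, ret, fun b b' hbb' => ?_, fun b => ?_, fun b k hk => ?_, hend, hinj⟩
  · have heq := σ.injective ((hend b).trans (hbb' ▸ (hend b').symm))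
    exact (hinj _ _ _ _ le_rfl le_rfl (Sum.inl_injective heq)).1
  · simpa using hwalk b 0 (Nat.zero_le _)
  · rw [← hwalk b k hk.le, ← hwalk b (k + 1) hk, ← Equiv.Perm.mul_apply, ← pow_succ']

end Excursions

section Calculus

variable {E : Type*} [NormedAddCommGroup E] [NormedSpace ℝ E]

theorem exists_integralCurve_of_contDiffAt [CompleteSpace E] {f : E → E} {x : E}
    (hf : ContDiffAt ℝ 1 f x) :
    ∃ γ : ℝ → E, γ 0 = x ∧ ∀ᶠ t in nhds 0, HasDerivAt γ (f (γ t)) t := by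
  obtain ⟨α, hα⟩ := hf.exists_eventually_eq_hasDerivAt 0
  rw [← nhds_prod_eq] at hα
  have hcurve : ∀ᶠ t in nhds (0 : ℝ), α x 0 = x ∧ HasDerivAt (α x) (f (α x t)) t :=
    (Continuous.prodMk_right x).tendsto' 0 (x, 0) rfl |>.eventually hα
  exact ⟨α x, hcurve.self_of_nhds.1, hcurve.mono fun _ => And.right⟩

theorem eventually_eq_of_eventually_hasDerivAt_zero {f : ℝ → E} {a : ℝ}
    (hf : ∀ᶠ t in nhds a, HasDerivAt f 0 t) : ∀ᶠ t in nhds a, f t = f a := by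
  obtain ⟨ε, hε, hball⟩ := Metric.eventually_nhds_iff_ball.mp hf
  filter_upwards [Metric.ball_mem_nhds a hε] with t ht
  exact Metric.isOpen_ball.is_const_of_deriv_eq_zero (convex_ball a ε).isPreconnected
    (fun s hs => (hball s hs).differentiableAt.differentiableWithinAt)
    (fun s hs => (hball s hs).deriv) ht (Metric.mem_ball_self hε)

theorem infinite_of_hasDerivAt_ne_zero {f : ℝ → E} {f' : E} {a : ℝ} {s : Set E}
    (hf : HasDerivAt f f' a) (hf' : f' ≠ 0) (hs : ∀ᶠ t in nhds a, f t ∈ s) : s.Infinite := by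
  intro hfin
  have hclosed : IsClosed (s \ {f a}) := (hfin.subset Set.sdiff_subset).isClosed
  have havoid : ∀ᶠ t in nhds a, f t ∉ s \ {f a} :=
    hf.continuousAt.eventually (hclosed.isOpen_compl.mem_nhds fun h => h.2 rfl)
  have hne := (hf.eventually_ne hf' (c := f a)).and
    ((havoid.and hs).filter_mono nhdsWithin_le_nhds)
  obtain ⟨t, htne, htavoid, hts⟩ := hne.exists
  exact htavoid ⟨hts, htne⟩

theorem contDiff_mvPolynomial_eval {σ : Type*} [Fintype σ] (p : MvPolynomial σ ℝ)
    {n : WithTop ℕ∞} : ContDiff ℝ n fun x => MvPolynomial.eval x p := by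
  simpa using (AnalyticOnNhd.eval_mvPolynomial p).contDiff

open scoped Matrix.Norms.Operator

theorem hasDerivAt_transpose {m n : Type*} [Finite m] [Finite n] {M : ℝ → Matrix m n ℝ}
    {M' : Matrix m n ℝ} {t : ℝ} (hM : HasDerivAt M M' t) :
    HasDerivAt (fun s => (M s)ᵀ) M'ᵀ t := by
  have := Fintype.ofFinite m
  have := Fintype.ofFinite n
  exact (LinearMap.toContinuousLinearMap
    (Matrix.transposeLinearEquiv m n ℝ ℝ).toLinearMap).hasFDerivAt.comp_hasDerivAt t hM

theorem hasDerivAt_inv_one_sub {n : Type*} [Fintype n] [DecidableEq n] {L : ℝ → Matrix n n ℝ}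
    {L' : Matrix n n ℝ} {t : ℝ} (hL : HasDerivAt L L' t) (hreg : IsUnit (1 - L t)) :
    HasDerivAt (fun s => (1 - L s)⁻¹) ((1 - L t)⁻¹ * L' * (1 - L t)⁻¹) t := by
  obtain ⟨u, hu⟩ := hreg
  have hinv : ((u⁻¹ : (Matrix n n ℝ)ˣ) : Matrix n n ℝ) = (1 - L t)⁻¹ := by
    rw [← hu, Matrix.coe_units_inv]
  have hring := hasFDerivAt_ringInverse (𝕜 := ℝ) u
  rw [hu, hinv] at hring
  have hcomp := hring.comp_hasDerivAt t (hL.const_sub 1)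
  have hfun : (fun s => (1 - L s)⁻¹) = Ring.inverse ∘ fun s => 1 - L s :=
    funext fun s => Matrix.nonsing_inv_eq_ringInverse _
  have hder : (1 - L t)⁻¹ * L' * (1 - L t)⁻¹ =
      (-(ContinuousLinearMap.mulLeftRight ℝ (Matrix n n ℝ) (1 - L t)⁻¹) (1 - L t)⁻¹) (-L') := by
    simp
  rw [hfun, hder]
  exact hcomp

end Calculus

namespace MixedGraph

section Coordinates

variable {V : Type*} [Fintype V] [DecidableEq V] (G : MixedGraph V) {R S : Type*} [CommRing R]
  [CommRing S]

/-- `L` is supported on the directed edges of `G`. -/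
def IsDirectedSupported (L : Matrix V V R) : Prop :=
  ∀ v w, (v, w) ∉ G.D → L v w = 0

/-- `O` is supported on the diagonal and the bidirected edges of `G`. -/
def IsBidirectedSupported (O : Matrix V V R) : Prop :=
  ∀ v w, v ≠ w → (v, w) ∉ G.B → O v w = 0

/-- The linear space of pairs `(Λ, Ω)`, over any commutative ring, that contains `Θ` as an open
subset when the ring is `ℝ`. -/
def IsParam (θ : Matrix V V R × Matrix V V R) : Prop :=
  G.IsDirectedSupported θ.1 ∧ G.IsBidirectedSupported θ.2 ∧ θ.2.IsSymm

/-- The unordered positions at which `Ω` may be nonzero. -/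
def covSupport : Finset (Sym2 V) :=
  (Finset.univ.image fun v => s(v, v)) ∪ G.B.image fun e => s(e.1, e.2)

variable {G} in
theorem mk_mem_covSupport {v w : V} : s(v, w) ∈ G.covSupport ↔ v = w ∨ (v, w) ∈ G.B := by
  have hsymm : (w, v) ∈ G.B → (v, w) ∈ G.B := G.B_symm w v
  simp only [covSupport, Finset.mem_union, Finset.mem_image, Finset.mem_univ, true_and,
    Sym2.eq_iff, Prod.exists]
  grind

/-- The index set of the free coordinates `λ_vw` (left summand) and `ω_vw = ω_wv` (right
summand). -/
abbrev FreeCoord := G.D ⊕ G.covSupport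

/-- The matrix supported on `D` with the given coefficients. -/
def directedMatrix : (G.D → R) →ₗ[R] Matrix V V R where
  toFun a := Matrix.of fun v w => if h : (v, w) ∈ G.D then a ⟨(v, w), h⟩ else 0
  map_add' a b := by ext v w; by_cases h : (v, w) ∈ G.D <;> simp [h]
  map_smul' c a := by ext v w; by_cases h : (v, w) ∈ G.D <;> simp [h]

/-- The symmetric matrix supported on the diagonal and `B` with the given coefficients. -/
def bidirectedMatrix : (G.covSupport → R) →ₗ[R] Matrix V V R where
  toFun a := Matrix.of fun v w => if h : s(v, w) ∈ G.covSupport then a ⟨s(v, w), h⟩ else 0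
  map_add' a b := by ext v w; by_cases h : s(v, w) ∈ G.covSupport <;> simp [h]
  map_smul' c a := by ext v w; by_cases h : s(v, w) ∈ G.covSupport <;> simp [h]

/-- The pair `(Λ, Ω)` with given free coordinates. -/
def toParam : (G.FreeCoord → R) →ₗ[R] Matrix V V R × Matrix V V R :=
  (G.directedMatrix ∘ₗ LinearMap.funLeft R R Sum.inl).prod
    (G.bidirectedMatrix ∘ₗ LinearMap.funLeft R R Sum.inr)

/-- The position at which a free coordinate is read off from `(Λ, Ω)`; for `Ω` it is an arbitrary
ordering of the unordered pair. -/
noncomputable def coordIndex : G.FreeCoord → (V × V) ⊕ (V × V) :=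
  Sum.map Subtype.val fun s => Quot.out s.1

/-- The free coordinates of `(Λ, Ω)`. -/
noncomputable def coord (θ : Matrix V V R × Matrix V V R) : G.FreeCoord → R :=
  Sum.elim (fun e => θ.1 e.1 e.2) (fun e => θ.2 e.1 e.2) ∘ G.coordIndex

variable {G}

theorem isDirectedSupported_directedMatrix (a : G.D → R) :
    G.IsDirectedSupported (G.directedMatrix a) :=
  fun _ _ h => dif_neg h

theorem directedMatrix_injective : Function.Injective (G.directedMatrix (R := R)) := by
  intro a b hab
  ext e
  simpa [directedMatrix] using congrFun (congrFun hab e.1.1) e.1.2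

theorem isParam_toParam (x : G.FreeCoord → R) : G.IsParam (G.toParam x) := by
  refine ⟨isDirectedSupported_directedMatrix _, fun v w hne hB => ?_, Matrix.ext fun v w => ?_⟩
  · exact dif_neg (mk_mem_covSupport.not.mpr (not_or.mpr ⟨hne, hB⟩))
  · simp [toParam, bidirectedMatrix, Sym2.eq_swap]

theorem toParam_coord {θ : Matrix V V R × Matrix V V R} (hθ : G.IsParam θ) :
    G.toParam (G.coord θ) = θ := by
  obtain ⟨hL, hO, hsymm⟩ := hθ
  refine Prod.ext (Matrix.ext fun v w => ?_) (Matrix.ext fun v w => ?_)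
  · by_cases h : (v, w) ∈ G.D
    · simp [toParam, directedMatrix, coord, coordIndex, h]
    · simp [toParam, directedMatrix, h, hL v w h]
  · by_cases h : s(v, w) ∈ G.covSupport
    · have hout : s((Quot.out s(v, w)).1, (Quot.out s(v, w)).2) = s(v, w) := Quot.out_eq _
      rcases Sym2.eq_iff.mp hout with ⟨h₁, h₂⟩ | ⟨h₁, h₂⟩
      · simp [toParam, bidirectedMatrix, coord, coordIndex, h, h₁, h₂]
      · simpa [toParam, bidirectedMatrix, coord, coordIndex, h, h₁, h₂] using hsymm.apply v w
    · obtain ⟨hne, hB⟩ := not_or.mp (mk_mem_covSupport.not.mp h)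
      simp [toParam, bidirectedMatrix, h, hO v w hne hB]

theorem coord_toParam (x : G.FreeCoord → R) : G.coord (G.toParam x) = x := by
  ext (e | s)
  · simp [toParam, directedMatrix, coord, coordIndex]
  · have hout : s(s.1.out.1, s.1.out.2) = s.1 := Quot.out_eq _
    simp [toParam, bidirectedMatrix, coord, coordIndex, hout]

theorem map_toParam (φ : R →+* S) (x : G.FreeCoord → R) :
    Prod.map φ.mapMatrix φ.mapMatrix (G.toParam x) = G.toParam (φ ∘ x) := by
  refine Prod.ext (Matrix.ext fun v w => ?_) (Matrix.ext fun v w => ?_)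
  · by_cases h : (v, w) ∈ G.D <;> simp [toParam, directedMatrix, h]
  · by_cases h : s(v, w) ∈ G.covSupport <;> simp [toParam, bidirectedMatrix, h]

theorem evalParam_rename_coordIndex (θ : Matrix V V ℝ × Matrix V V ℝ)
    (p : MvPolynomial G.FreeCoord ℝ) :
    evalParam θ (MvPolynomial.rename G.coordIndex p) = MvPolynomial.eval (G.coord θ) p :=
  MvPolynomial.eval_rename _ _ _

end Coordinates

section Treks

variable {V : Type*} [Fintype V] [DecidableEq V] {G : MixedGraph V}

theorem exists_halfTrek_of_walk {y : V} {walk : ℕ → V} {n : ℕ}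
    (hy : y = walk 0 ∨ (y, walk 0) ∈ G.B) (hwalk : ∀ k < n, (walk k, walk (k + 1)) ∈ G.D) :
    ∃ π : G.Trek, π.left = [y] ∧ π.right = (List.range (n + 1)).map walk := by
  refine ⟨⟨[y], (List.range (n + 1)).map walk, by simp, by simp, decide (y ≠ walk 0),
    List.isChain_singleton y, ?_, ?_⟩, rfl, rfl⟩
  · exact (List.isChain_map _).mpr ((List.isChain_range_succ _ _).mpr hwalk)
  · by_cases h0 : y = walk 0
    · simp [h0]
    · simp [h0, hy.resolve_left h0]

variable {P R : Type*} [Fintype P] [DecidableEq P] [CommRing R] [IsDomain R]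
  {L O : Matrix V V R}

theorem exists_halfTreks_of_det_ne_zero (hL : G.IsDirectedSupported L)
    (hO : G.IsBidirectedSupported O) (hreg : (1 - L).det ≠ 0) {y q : P → V}
    (hdet : ((O * (1 - L).adjugate).submatrix y q).det ≠ 0) :
    ∃ (f : P → G.Trek) (ret : P → P), Function.Injective ret ∧
      (∀ p, (f p).left = [y p]) ∧ (∀ p, (f p).target = q (ret p)) ∧
      Pairwise fun p p' => Disjoint (f p).rightSet (f p').rightSet := by
  obtain ⟨σ, hσ⟩ := exists_perm_forall_fromBlocks_ne_zero hreg hdet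
  have hleft : ∀ p, (σ (.inr p)).isLeft := fun p =>
    Sum.not_isRight.mp fun hp => by
      obtain ⟨p', hp'⟩ := Sum.isRight_iff.mp hp
      simpa [hp'] using hσ (.inr p)
  obtain ⟨len, walk, ret, hret, hstart, hstep, hend, hinj⟩ := exists_excursions σ hleft
  have hedge : ∀ p, ∀ k < len p, (walk p k, walk p (k + 1)) ∈ G.D := by
    intro p k hk
    have hne : walk p k ≠ walk p (k + 1) := fun heq =>
      k.succ_ne_self (hinj p p _ _ hk.le hk heq).2.symm
    by_contra hD
    simpa [hstep p k hk, hne, hL _ _ hD] using hσ (.inl (walk p k))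
  have hhead : ∀ p, y p = walk p 0 ∨ (y p, walk p 0) ∈ G.B := by
    intro p
    by_contra! hB
    simpa [hstart, hO _ _ hB.1 hB.2] using hσ (.inr p)
  have hlast : ∀ p, walk p (len p) = q (ret p) := fun p => by
    by_contra hne
    simpa [hend, hne] using hσ (.inl (walk p (len p)))
  choose f hfleft hfright using fun p => exists_halfTrek_of_walk (hhead p) (hedge p)
  refine ⟨f, ret, hret, hfleft, fun p => ?_, fun p p' hne => ?_⟩
  · simp [Trek.target, hfright, hlast]
  · simp only [Trek.rightSet, hfright, Finset.disjoint_left, List.mem_toFinset, List.mem_map,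
      List.mem_range]
    rintro _ ⟨k, hk, rfl⟩ ⟨k', hk', heq⟩
    exact hne (hinj _ _ _ _ (by lia) (by lia) heq).1.symm

theorem satisfiesHTC_of_det_ne_zero (hL : G.IsDirectedSupported L)
    (hO : G.IsBidirectedSupported O) (hreg : (1 - L).det ≠ 0) {v : V} {y q : P → V}
    (hy : Function.Injective y) (hq : Function.Injective q) (hpa : Finset.univ.image q = G.pa v)
    (hyv : ∀ p, y p ≠ v ∧ y p ∉ G.sib v)
    (hdet : ((O * (1 - L).adjugate).submatrix y q).det ≠ 0) :
    G.SatisfiesHTC v (Finset.univ.image y) := by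
  obtain ⟨π, ret, hret, hleft, htarget, hdisj⟩ := exists_halfTreks_of_det_ne_zero hL hO hreg hdet
  obtain ⟨trivialTrek, -⟩ :=
    exists_halfTrek_of_walk (G := G) (y := v) (walk := fun _ => v) (n := 0) (.inl rfl) (by simp)
  let f : V → G.Trek := Function.extend y π fun _ => trivialTrek
  have hf : ∀ p, f (y p) = π p := hy.extend_apply π _
  refine ⟨?_, by simpa using hyv, f, ?_, ⟨?_, ?_, ?_⟩, ?_⟩
  · rw [← hpa, Finset.card_image_of_injective _ hy, Finset.card_image_of_injective _ hq]
  · simp [hf, Trek.IsHalfTrek, Trek.leftSet, hleft]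
  · simp [hf, Trek.source, hleft]
  · have hsurj : Finset.univ.image ret = Finset.univ :=
      Finset.image_univ_of_surjective (Finite.surjective_of_injective hret)
    have htargets : (fun v => (f v).target) ∘ y = q ∘ ret :=
      funext fun p => by rw [Function.comp_apply, hf, htarget, Function.comp_apply]
    rw [Finset.image_image, htargets, ← Finset.image_image, hsurj, hpa]
  · simp only [Finset.forall_mem_image, hf, htarget]
    exact fun p _ p' _ hne heq => hne (congrArg y (hret (hq heq)))
  · simp only [NoSidedIntersection, Finset.forall_mem_image, hf]
    refine fun p _ p' _ hne => ⟨?_, hdisj (ne_of_apply_ne y hne)⟩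
    simpa [Trek.leftSet, hleft] using hne

end Treks

section TangentKernel

variable {V : Type*} [Fintype V] [DecidableEq V] (G : MixedGraph V) {R : Type*} [CommRing R]

/-- The ordered positions at which `Ω` vanishes. -/
abbrev NonSiblingPair := {p : V × V // p.1 ≠ p.2 ∧ p ∉ G.B}

/-- The same position in the transposed matrix. -/
def NonSiblingPair.swap (p : G.NonSiblingPair) : G.NonSiblingPair :=
  ⟨p.1.swap, p.2.1.symm, fun h => p.2.2 (G.B_symm _ _ h)⟩

/-- The matrix of the linear map that takes the coefficients of a matrix `Λ` supported on `D` to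
the entries of `M * Λ` at the positions where `Ω` vanishes. -/
def mulDirectedMatrix (M : Matrix V V R) : Matrix G.NonSiblingPair G.D R :=
  Matrix.of fun p e => if p.1.2 = e.1.2 then M p.1.1 e.1.1 else 0

variable {G}

theorem NonSiblingPair.swap_involutive : Function.Involutive (NonSiblingPair.swap G) := fun _ => rfl

theorem mulDirectedMatrix_mulVec (M : Matrix V V R) (a : G.D → R) (p : G.NonSiblingPair) :
    (G.mulDirectedMatrix M *ᵥ a) p = (M * G.directedMatrix a) p.1.1 p.1.2 := by
  let term : V × V → R := fun x =>
    if p.1.2 = x.2 then M p.1.1 x.1 * G.directedMatrix a x.1 x.2 else 0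
  have hterm : ∀ x, x ∉ G.D → term x = 0 := fun x hx => by
    simp [term, isDirectedSupported_directedMatrix a x.1 x.2 hx]
  calc (G.mulDirectedMatrix M *ᵥ a) p = ∑ e : G.D, term e := by
        simp [Matrix.mulVec, dotProduct, mulDirectedMatrix, term, directedMatrix]
    _ = ∑ x, term x := by
        rw [Finset.sum_coe_sort G.D term]
        exact Finset.sum_subset (Finset.subset_univ _) fun x _ => hterm x
    _ = (M * G.directedMatrix a) p.1.1 p.1.2 := by
        simp [term, Fintype.sum_prod_type, Matrix.mul_apply]

theorem exists_htc_family_of_det_ne_zero [IsDomain R] {L O : Matrix V V R}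
    (hL : G.IsDirectedSupported L) (hO : G.IsBidirectedSupported O) (hreg : (1 - L).det ≠ 0)
    {κ : G.D → G.NonSiblingPair} (hκ : ∀ e e', κ e = κ e' ∨ κ e = (κ e').swap → e = e')
    (hhead : ∀ e, (κ e).1.2 = e.1.2)
    (hdet : ((G.mulDirectedMatrix (O * (1 - L).adjugate)).submatrix κ id).det ≠ 0) :
    ∃ Y : V → Finset V, (∀ v, G.SatisfiesHTC v (Y v)) ∧ ∀ v w, v ∈ Y w → w ∉ Y v := by
  refine ⟨fun v => Finset.univ.image fun e : {e : G.D // e.1.2 = v} => (κ e).1.1,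
    fun v => ?_, fun v w hv hw => ?_⟩
  · refine satisfiesHTC_of_det_ne_zero hL hO hreg (q := fun e => e.1.1.1) ?_ ?_ ?_ ?_ ?_
    · intro e e' h
      refine Subtype.ext (hκ _ _ (.inl (Subtype.ext (Prod.ext h ?_))))
      rw [hhead, hhead, e.2, e'.2]
    · intro e e' h
      exact Subtype.ext (Subtype.ext (Prod.ext h (e.2.trans e'.2.symm)))
    · ext w
      simp [pa]
    · intro e
      have hv : (κ e).1.2 = v := (hhead e).trans e.2
      exact ⟨fun h => (κ e).2.1 (h.trans hv.symm), by simpa [sib, ← hv] using (κ e).2.2⟩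
    · rw [Matrix.twoBlockTriangular_det _ fun e : G.D => e.1.2 = v] at hdet
      · convert left_ne_zero_of_mul hdet using 2
        ext e e'
        simp [Matrix.toSquareBlockProp, mulDirectedMatrix, hhead, e.2, e'.2]
      · intro e he e' he'
        simp [mulDirectedMatrix, hhead, he, he']
  · obtain ⟨e, -, rfl⟩ := Finset.mem_image.mp hv
    obtain ⟨e', -, hw⟩ := Finset.mem_image.mp hw
    have he : (κ e).1.2 = w := (hhead e).trans e.2
    have he' : (κ e').1.2 = (κ e).1.1 := (hhead e').trans e'.2
    have heq : e'.1 = e.1 := hκ _ _ (.inr (Subtype.ext (Prod.ext (hw.trans he.symm) he')))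
    rw [heq] at he'
    exact (κ e).2.1 he'.symm

theorem exists_ne_zero_isBidirectedSupported_add_transpose [IsDomain R]
    (h : G.HTCInfiniteToOne) {L O : Matrix V V R} (hL : G.IsDirectedSupported L)
    (hO : G.IsBidirectedSupported O) (hreg : (1 - L).det ≠ 0) :
    ∃ a : G.D → R, a ≠ 0 ∧ G.IsBidirectedSupported
      (O * (1 - L).adjugate * G.directedMatrix a +
        (O * (1 - L).adjugate * G.directedMatrix a)ᵀ) := by
  set M := O * (1 - L).adjugate
  let Z := G.mulDirectedMatrix M
  let J := Z + Z.submatrix (NonSiblingPair.swap G) id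
  by_contra! hker
  have hJ : Function.Injective J.mulVec := by
    refine (injective_iff_map_eq_zero J.mulVecLin).mpr fun a ha => ?_
    by_contra hne
    refine hker a hne fun v w hvw hB => ?_
    have hp := congrFun ha ⟨(v, w), hvw, hB⟩
    have hswap : Z.submatrix (NonSiblingPair.swap G) id *ᵥ a =
      (Z *ᵥ a) ∘ NonSiblingPair.swap G := rfl
    rw [Matrix.mulVecLin_apply, Matrix.add_mulVec, hswap] at hp
    simpa [Z, mulDirectedMatrix_mulVec, NonSiblingPair.swap, -Matrix.transpose_mul] using hp
  obtain ⟨ι, hι⟩ := exists_submatrix_det_ne_zero hJ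
  obtain ⟨κ, hκ, hne, hdet⟩ := exists_selection_det_ne_zero NonSiblingPair.swap_involutive hι
  have hhead : ∀ e, (κ e).1.2 = e.1.2 := fun e => of_not_not fun hhead =>
    hne e (by simp [Z, mulDirectedMatrix, hhead])
  obtain ⟨Y, hY, hmutual⟩ := exists_htc_family_of_det_ne_zero hL hO hreg hκ hhead hdet
  rcases h Y with ⟨v, hv⟩ | ⟨v, w, hv, hw⟩
  · exact hv (hY v)
  · exact hmutual v w hv hw

end TangentKernel

section FiberTangent

variable {V : Type*} [Fintype V] [DecidableEq V] {G : MixedGraph V} {R S : Type*} [CommRing R]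
  [CommRing S]

/-- The direction `θ' = (Λ', Ω')` is tangent at `θ = (Λ, Ω)` to the fiber of `φ`: for
symmetric `Ω` this is `dφ_θ(θ') = 0` multiplied by `(I - Λ)ᵀ` on the left, by `I - Λ` on the right,
and by `det (I - Λ)`, so that it makes sense over any commutative ring. -/
def IsFiberTangent (θ θ' : Matrix V V R × Matrix V V R) : Prop :=
  (1 - θ.1).det • θ'.2 + (θ.2 * (1 - θ.1).adjugate * θ'.1 +
    (θ.2 * (1 - θ.1).adjugate * θ'.1)ᵀ) = 0

theorem IsFiberTangent.map {θ θ' : Matrix V V R × Matrix V V R} (h : IsFiberTangent θ θ')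
    (φ : R →+* S) : IsFiberTangent (Prod.map φ.mapMatrix φ.mapMatrix θ)
      (Prod.map φ.mapMatrix φ.mapMatrix θ') := by
  have hmap := congrArg φ.mapMatrix h
  have hsmul : ∀ (c : R) (M : Matrix V V R), φ.mapMatrix (c • M) = φ c • φ.mapMatrix M :=
    fun c M => Matrix.ext fun v w => map_mul φ c (M v w)
  have htranspose : ∀ M : Matrix V V R, φ.mapMatrix Mᵀ = (φ.mapMatrix M)ᵀ := fun M => rfl
  simpa only [IsFiberTangent, Prod.map_fst, Prod.map_snd, map_add, map_mul, map_zero, hsmul,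
    htranspose, RingHom.map_det, RingHom.map_adjugate, map_sub, map_one] using hmap

theorem exists_isFiberTangent [IsDomain R] (h : G.HTCInfiniteToOne)
    {θ : Matrix V V R × Matrix V V R} (hθ : G.IsParam θ) (hreg : (1 - θ.1).det ≠ 0) :
    ∃ θ', θ' ≠ 0 ∧ G.IsParam θ' ∧ IsFiberTangent θ θ' := by
  obtain ⟨a, ha, hsupp⟩ :=
    exists_ne_zero_isBidirectedSupported_add_transpose h hθ.1 hθ.2.1 hreg
  set T := θ.2 * (1 - θ.1).adjugate * G.directedMatrix a with hT
  refine ⟨((1 - θ.1).det • G.directedMatrix a, -(T + Tᵀ)), fun h0 => ?_, ⟨?_, ?_, ?_⟩, ?_⟩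
  · have hzero := (smul_eq_zero_iff_right hreg).mp (congrArg Prod.fst h0)
    exact ha (directedMatrix_injective (hzero.trans (map_zero _).symm))
  · intro v w hvw
    simp [isDirectedSupported_directedMatrix a v w hvw]
  · intro v w hne hB
    simpa using congrArg Neg.neg (hsupp v w hne hB)
  · rw [Matrix.IsSymm, Matrix.transpose_neg, Matrix.transpose_add, Matrix.transpose_transpose,
      add_comm]
  · simp only [IsFiberTangent, Matrix.mul_smul, ← hT, Matrix.transpose_smul, ← smul_add, smul_neg,
      neg_add_cancel]

variable (G) in
/-- The generic point of the parameter space: its free coordinates are indeterminates. -/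
noncomputable def genericParam : Matrix V V (MvPolynomial G.FreeCoord ℝ) ×
    Matrix V V (MvPolynomial G.FreeCoord ℝ) :=
  G.toParam MvPolynomial.X

theorem map_eval_genericParam (x : G.FreeCoord → ℝ) :
    Prod.map (MvPolynomial.eval x).mapMatrix (MvPolynomial.eval x).mapMatrix G.genericParam =
      G.toParam x := by
  simp [genericParam, map_toParam, Function.comp_def]

theorem eval_det_one_sub_genericParam (x : G.FreeCoord → ℝ) :
    MvPolynomial.eval x (1 - G.genericParam.1).det = (1 - (G.toParam x).1).det := by
  rw [← map_eval_genericParam x, RingHom.map_det, map_sub, map_one, Prod.map_fst]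

theorem det_one_sub_genericParam_ne_zero : (1 - G.genericParam.1).det ≠ 0 := by
  intro h0
  have heval := eval_det_one_sub_genericParam (0 : G.FreeCoord → ℝ)
  simp [h0] at heval

theorem exists_polynomial_isFiberTangent (h : G.HTCInfiniteToOne) :
    ∃ F : G.FreeCoord → MvPolynomial G.FreeCoord ℝ, F ≠ 0 ∧
      ∀ x, IsFiberTangent (G.toParam x) (G.toParam fun i => MvPolynomial.eval x (F i)) := by
  obtain ⟨θ', hne, hparam, htangent⟩ :=
    exists_isFiberTangent h (θ := G.genericParam) (isParam_toParam _)
      det_one_sub_genericParam_ne_zero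
  have hF : G.toParam (G.coord θ') = θ' := toParam_coord hparam
  refine ⟨G.coord θ', fun h0 => hne ?_, fun x => ?_⟩
  · rw [← hF, h0, map_zero]
  · have hmap := htangent.map (MvPolynomial.eval x)
    rwa [map_eval_genericParam, ← hF, map_toParam] at hmap

end FiberTangent

section Theta

variable {V : Type*} [Fintype V] [DecidableEq V] {G : MixedGraph V}

theorem mem_theta_iff {θ : Matrix V V ℝ × Matrix V V ℝ} :
    θ ∈ G.Theta ↔ G.IsParam θ ∧ IsUnit (1 - θ.1).det ∧ θ.2.PosDef :=
  ⟨fun h => ⟨⟨h.1.1, h.2.2, h.2.1.isHermitian⟩, h.1.2, h.2.1⟩,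
    fun h => ⟨⟨h.1.1, h.2.1⟩, h.2.2, h.1.2.1⟩⟩

theorem posDef_toParam {x : G.FreeCoord → ℝ}
    (hdiag : ∀ s : G.covSupport, s.1.IsDiag → Fintype.card V < x (.inr s))
    (hoff : ∀ s : G.covSupport, ¬ s.1.IsDiag → ‖x (.inr s)‖ ≤ 1) : (G.toParam x).2.PosDef := by
  refine posDef_of_diagonally_dominant (isParam_toParam x).2.2 fun v => ?_
  have hentry : ∀ w ∈ Finset.univ.erase v, ‖(G.toParam x).2 v w‖ ≤ 1 := by
    intro w hw
    by_cases h : s(v, w) ∈ G.covSupport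
    · simpa [toParam, bidirectedMatrix, h] using
        hoff ⟨s(v, w), h⟩ (by simpa using (Finset.ne_of_mem_erase hw).symm)
    · simp [toParam, bidirectedMatrix, h]
  have hvv : s(v, v) ∈ G.covSupport := mk_mem_covSupport.mpr (.inl rfl)
  calc ∑ w ∈ Finset.univ.erase v, ‖(G.toParam x).2 v w‖
      ≤ (Finset.univ.erase v).card • (1 : ℝ) := Finset.sum_le_card_nsmul _ _ _ hentry
    _ ≤ Fintype.card V := by simp
    _ < x (.inr ⟨s(v, v), hvv⟩) := hdiag _ (by simp)
    _ = (G.toParam x).2 v v := by simp [toParam, bidirectedMatrix, hvv]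

theorem exists_mem_theta_eval_coord_ne_zero {p : MvPolynomial G.FreeCoord ℝ} (hp : p ≠ 0) :
    ∃ θ ∈ G.Theta, MvPolynomial.eval (G.coord θ) p ≠ 0 := by
  let box : G.FreeCoord → Set ℝ := Sum.elim (fun _ => Set.univ)
    fun s => if s.1.IsDiag then Set.Ioi (Fintype.card V) else Set.Icc (-1) 1
  have hbox : ∀ i, (box i).Infinite := by
    rintro (_ | s)
    · exact Set.infinite_univ
    · by_cases hs : s.1.IsDiag
      · simp [box, hs, Set.Ioi_infinite]
      · simpa [box, hs] using Set.Icc_infinite (by norm_num)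
  have hne : p * (1 - G.genericParam.1).det ≠ 0 :=
    mul_ne_zero hp det_one_sub_genericParam_ne_zero
  obtain ⟨x, hx, heval⟩ : ∃ x ∈ Set.univ.pi box,
      MvPolynomial.eval x (p * (1 - G.genericParam.1).det) ≠ 0 := by
    contrapose! hne
    exact MvPolynomial.funext_set box hbox fun x hx => by rw [hne x hx, map_zero]
  rw [map_mul, eval_det_one_sub_genericParam] at heval
  refine ⟨G.toParam x, mem_theta_iff.mpr ⟨isParam_toParam x,
    (right_ne_zero_of_mul heval).isUnit, posDef_toParam (fun s hs => ?_) fun s hs => ?_⟩, ?_⟩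
  · simpa [box, hs] using hx (.inr s) trivial
  · simpa [box, hs, abs_le] using hx (.inr s) trivial
  · rw [coord_toParam]
    exact left_ne_zero_of_mul heval

theorem isProperAlgebraic_setOf_eval_coord_eq_zero {p : MvPolynomial G.FreeCoord ℝ}
    (hp : p ≠ 0) :
    G.IsProperAlgebraic {θ ∈ G.Theta | MvPolynomial.eval (G.coord θ) p = 0} :=
  ⟨MvPolynomial.rename G.coordIndex p, by
    simpa only [evalParam_rename_coordIndex] using exists_mem_theta_eval_coord_ne_zero hp, by
    simp only [evalParam_rename_coordIndex]⟩

theorem posDef_phi_iff {θ : Matrix V V ℝ × Matrix V V ℝ} (hreg : IsUnit (1 - θ.1).det) :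
    (phi θ.1 θ.2).PosDef ↔ θ.2.PosDef := by
  have hinv : IsUnit (1 - θ.1)⁻¹ :=
    Matrix.isUnit_nonsing_inv_iff.mpr ((Matrix.isUnit_iff_isUnit_det _).mpr hreg)
  exact Matrix.IsUnit.posDef_star_left_conjugate_iff hinv

end Theta

section FiberTangentFlow

variable {V : Type*} [Fintype V] [DecidableEq V] {G : MixedGraph V}

open scoped Matrix.Norms.Operator

theorem IsFiberTangent.conj_derivative_phi_eq_zero {θ θ' : Matrix V V ℝ × Matrix V V ℝ}
    (h : IsFiberTangent θ θ') (hreg : IsUnit (1 - θ.1).det) (hsymm : θ.2.IsSymm) :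
    θ'.1ᵀ * ((1 - θ.1)⁻¹)ᵀ * θ.2 + θ'.2 + θ.2 * (1 - θ.1)⁻¹ * θ'.1 = 0 := by
  have hadj : (1 - θ.1).adjugate = (1 - θ.1).det • (1 - θ.1)⁻¹ := by
    rw [Matrix.inv_def, smul_smul, Ring.mul_inverse_cancel _ hreg, one_smul]
  have htranspose : (θ.2 * (1 - θ.1)⁻¹ * θ'.1)ᵀ = θ'.1ᵀ * ((1 - θ.1)⁻¹)ᵀ * θ.2 := by
    rw [Matrix.transpose_mul, Matrix.transpose_mul, hsymm, Matrix.mul_assoc]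
  rw [IsFiberTangent, hadj, Matrix.mul_smul, Matrix.smul_mul, Matrix.transpose_smul, htranspose,
    ← smul_add, ← smul_add] at h
  rw [← (smul_eq_zero_iff_right hreg.ne_zero).mp h]
  abel

theorem IsFiberTangent.hasDerivAt_phi {θ : ℝ → Matrix V V ℝ × Matrix V V ℝ}
    {θ' : Matrix V V ℝ × Matrix V V ℝ} {t : ℝ} (h : IsFiberTangent (θ t) θ')
    (hθ : HasDerivAt θ θ' t) (hreg : IsUnit (1 - (θ t).1).det) (hsymm : (θ t).2.IsSymm) :
    HasDerivAt (fun s => phi (θ s).1 (θ s).2) 0 t := by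
  have hinv := hasDerivAt_inv_one_sub hθ.fst ((Matrix.isUnit_iff_isUnit_det _).mpr hreg)
  have hprod := ((hasDerivAt_transpose hinv).mul hθ.snd).mul hinv
  have hzero : (((1 - (θ t).1)⁻¹ * θ'.1 * (1 - (θ t).1)⁻¹)ᵀ * (θ t).2 +
      ((1 - (θ t).1)⁻¹)ᵀ * θ'.2) * (1 - (θ t).1)⁻¹ +
      ((1 - (θ t).1)⁻¹)ᵀ * (θ t).2 * ((1 - (θ t).1)⁻¹ * θ'.1 * (1 - (θ t).1)⁻¹) = 0 := by
    set P := (1 - (θ t).1)⁻¹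
    calc _ = Pᵀ * (θ'.1ᵀ * Pᵀ * (θ t).2 + θ'.2 + (θ t).2 * P * θ'.1) * P := by
          simp only [Matrix.transpose_mul]
          noncomm_ring
      _ = 0 := by rw [h.conj_derivative_phi_eq_zero hreg hsymm, mul_zero, zero_mul]
  rw [← hzero]
  exact hprod

theorem hasDerivAt_toParam {γ : ℝ → G.FreeCoord → ℝ} {γ' : G.FreeCoord → ℝ} {t : ℝ}
    (hγ : HasDerivAt γ γ' t) : HasDerivAt (fun s => G.toParam (γ s)) (G.toParam γ') t :=
  (LinearMap.toContinuousLinearMap (G.toParam (R := ℝ))).hasFDerivAt.comp_hasDerivAt t hγ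

theorem infinite_setOf_phi_eq {F : G.FreeCoord → MvPolynomial G.FreeCoord ℝ}
    (hF : ∀ x, IsFiberTangent (G.toParam x) (G.toParam fun i => MvPolynomial.eval x (F i)))
    {θ : Matrix V V ℝ × Matrix V V ℝ} (hθ : θ ∈ G.Theta)
    (hne : (fun i => MvPolynomial.eval (G.coord θ) (F i)) ≠ 0) :
    {θ' ∈ G.Theta | phi θ'.1 θ'.2 = phi θ.1 θ.2}.Infinite := by
  obtain ⟨hparam, hreg, hpos⟩ := mem_theta_iff.mp hθ
  obtain ⟨γ, hγ0, hγ⟩ := exists_integralCurve_of_contDiffAt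
    (f := fun x i => MvPolynomial.eval x (F i)) (x := G.coord θ)
    (contDiff_pi.mpr fun i => contDiff_mvPolynomial_eval (F i)).contDiffAt
  let Γ : ℝ → Matrix V V ℝ × Matrix V V ℝ := fun t => G.toParam (γ t)
  have hΓ0 : Γ 0 = θ := by rw [← toParam_coord hparam, ← hγ0]
  have hΓreg : ∀ᶠ t in nhds 0, IsUnit (1 - (Γ t).1).det := by
    have hcont : ContinuousAt (fun t => (1 - (Γ t).1).det) 0 :=
      (Continuous.matrix_det continuous_id).continuousAt.comp
        (continuousAt_const.sub (hasDerivAt_toParam hγ.self_of_nhds).continuousAt.fst)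
    refine (hcont.eventually_ne ?_).mono fun t ht => ht.isUnit
    rw [hΓ0]
    exact hreg.ne_zero
  have hphi : ∀ᶠ t in nhds 0, phi (Γ t).1 (Γ t).2 = phi θ.1 θ.2 := by
    rw [← hΓ0]
    refine eventually_eq_of_eventually_hasDerivAt_zero ?_
    filter_upwards [hγ, hΓreg] with t ht htreg
    exact IsFiberTangent.hasDerivAt_phi (θ := Γ) (hF (γ t)) (hasDerivAt_toParam ht) htreg
      (isParam_toParam _).2.2
  refine Set.infinite_of_injOn_mapsTo (Function.LeftInverse.injective coord_toParam).injOn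
    (Set.mapsTo_preimage G.toParam _)
    (infinite_of_hasDerivAt_ne_zero hγ.self_of_nhds (hγ0 ▸ hne) ?_)
  filter_upwards [hΓreg, hphi] with t htreg htphi
  refine ⟨mem_theta_iff.mpr ⟨isParam_toParam _, htreg, ?_⟩, htphi⟩
  rwa [← posDef_phi_iff htreg, htphi, posDef_phi_iff hreg]

end FiberTangentFlow

end MixedGraph

/-- **HTC-nonidentifiability** (Theorem 2): if every family `(Y v : v ∈ V)` of subsets of
the vertex set either contains a set `Y v` failing the half-trek criterion with respect to
`v`, or contains a pair `(Y v, Y w)` with `v ∈ Y w` and `w ∈ Y v`, then the parametrization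
`φ_G` is generically infinite-to-one. -/
theorem htc_nonidentifiability {V : Type*} [Fintype V] [DecidableEq V] (G : MixedGraph V)
    (h : ∀ Y : V → Finset V,
      (∃ v, ¬ G.SatisfiesHTC v (Y v)) ∨ ∃ v w, v ∈ Y w ∧ w ∈ Y v) :
    G.GenInfiniteToOne := by
  obtain ⟨F, hF, htangent⟩ := MixedGraph.exists_polynomial_isFiberTangent h
  obtain ⟨i, hi⟩ := Function.ne_iff.mp hF
  refine ⟨_, MixedGraph.isProperAlgebraic_setOf_eval_coord_eq_zero hi, fun θ hθ => ?_⟩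
  exact MixedGraph.infinite_setOf_phi_eq htangent hθ.1 fun h0 => hθ.2 ⟨hθ.1, congrFun h0 i⟩
end
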